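/- Let f(θ1,θ2,θ3) be an entire function of three complex variables, 2π-periodic in each variable. Then the triple correlation sum over distinct eigenvalue indices, T_3(f) := ∫_{U(N)} Σ*_{j1,j2,j3} f(θ_{j1}, θ_{j2}, θ_{j3}) dX (the star denoting that j1, j2, j3 are pairwise distinct indices of eigenvalues e^{iθ_j} of X), equals (1/(2π)^3) ∫_{−π}^{π} ∫_{−π}^{π} ∫_{−π}^{π} [ J(iθ1,iθ2;−iθ3) + J(iθ1,iθ3;−iθ2) + J(iθ2,iθ3;−iθ1) + J(−iθ1,−iθ2;iθ3) + J(−iθ1,−iθ3;iθ2) + J(−iθ2,−iθ3;iθ1) + N( J(−iθ1;iθ3) + J(−iθ2;iθ3) + J(−iθ1;iθ2) + J(−iθ3;iθ2) + J(−iθ2;iθ1) + J(−iθ3;iθ1) ) + N^3 ] f(θ1,θ2,θ3) dθ1 dθ2 dθ3, where J denotes the explicit closed-form expressions defined in the context and the integrand is interpreted via its (entire) analytic continuation across the removable singularities at coinciding θ's. -/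

import Mathlib

open Complex Matrix MeasureTheory Real intervalIntegral

noncomputable section

open scoped Classical

instance matrixMeasurableSpace (N : ℕ) : MeasurableSpace (Matrix (Fin N) (Fin N) ℂ) :=
  (inferInstance : MeasurableSpace (Fin N → Fin N → ℂ))

/-- The characteristic polynomial `Λ_X(s) = det(I − s X*)` of a unitary matrix `X`. -/
def Lam {N : ℕ} (X : Matrix.unitaryGroup (Fin N) ℂ) (s : ℂ) : ℂ :=
  Matrix.det ((1 : Matrix (Fin N) (Fin N) ℂ) - s • (X : Matrix (Fin N) (Fin N) ℂ)ᴴ)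

/-- `z(x) = 1/(1 − e^{−x})`. -/
def zf (x : ℂ) : ℂ := (1 - Complex.exp (-x))⁻¹

/-- The logarithmic derivative `z'/z`. -/
def zl (x : ℂ) : ℂ := deriv zf x / zf x

/-- `J(α;β) = (z'/z)'(α+β) + e^{−N(α+β)} z(α+β) z(−α−β)`. -/
def Jb (N : ℕ) (α β : ℂ) : ℂ :=
  deriv zl (α + β) + Complex.exp (-(N : ℂ) * (α + β)) * zf (α + β) * zf (-α - β)

/-- `J(α1,α2;β)`, the three-variable closed-form expression. -/
def Ja (N : ℕ) (α1 α2 β : ℂ) : ℂ :=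
  Complex.exp (-(N : ℂ) * (α1 + β)) * zf (α1 + β) * zf (-α1 - β) *
      (zl (α2 - α1) - zl (α2 + β)) +
    Complex.exp (-(N : ℂ) * (α2 + β)) * zf (α2 + β) * zf (-α2 - β) *
      (zl (α1 - α2) - zl (α1 + β))

/-- The sum of all the `J`-terms appearing in the triple correlation formula for `U(N)`. -/
def Jsum (N : ℕ) (θ1 θ2 θ3 : ℂ) : ℂ :=
  Ja N (Complex.I * θ1) (Complex.I * θ2) (-(Complex.I * θ3)) +
    Ja N (Complex.I * θ1) (Complex.I * θ3) (-(Complex.I * θ2)) +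
    Ja N (Complex.I * θ2) (Complex.I * θ3) (-(Complex.I * θ1)) +
    Ja N (-(Complex.I * θ1)) (-(Complex.I * θ2)) (Complex.I * θ3) +
    Ja N (-(Complex.I * θ1)) (-(Complex.I * θ3)) (Complex.I * θ2) +
    Ja N (-(Complex.I * θ2)) (-(Complex.I * θ3)) (Complex.I * θ1) +
    (N : ℂ) * (Jb N (-(Complex.I * θ1)) (Complex.I * θ3) +
      Jb N (-(Complex.I * θ2)) (Complex.I * θ3) +
      Jb N (-(Complex.I * θ1)) (Complex.I * θ2) +
      Jb N (-(Complex.I * θ3)) (Complex.I * θ2) +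
      Jb N (-(Complex.I * θ2)) (Complex.I * θ1) +
      Jb N (-(Complex.I * θ3)) (Complex.I * θ1)) +
    (N : ℂ) ^ 3

/-!
The Weyl integration formula is obtained in an algebraic form. Left invariance of Haar measure
gives the loop (Schwinger-Dyson) equations for the traces `tr (X ^ a)`, and the constant term of
`|Δ|² P`, with `Δ` the Vandermonde determinant, satisfies the same equations. They determine a
normalized functional: the loop operators combine into a Casimir operator that acts diagonally on
the monomials of the antisymmetric polynomial `Δ P`, and among exponents with distinct entries its
eigenvalue vanishes only at the permutations of the staircase `(0, 1, …, N - 1)`.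

Expanding the determinants, the sum of a character of the torus over `n` distinct eigenangles has
the same mean as its integral against the determinant of the Fourier kernels
`∑_{l < N} e^{il(t_i - t_j)}`, and characters span a dense subspace of the continuous functions.
For `n = 3`, partial fractions turn the sum of the `J`-terms into this determinant wherever the
three angles are distinct modulo `2π`.
-/

section SignedSum

variable {B C : Type*} [AddCommGroup B] [AddCommGroup C]

/-- The oriented sum `∑_{0 ≤ m < a} φ m`, meaning `-∑_{a ≤ m < 0} φ m` when `a` is negative. -/
def signedSum (a : ℤ) (φ : ℤ → B) : B :=
  ∑ m ∈ Finset.Ico 0 a, φ m - ∑ m ∈ Finset.Ico a 0, φ m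

lemma signedSum_zero (φ : ℤ → B) : signedSum 0 φ = 0 := by simp [signedSum]

lemma signedSum_add_one (a : ℤ) (φ : ℤ → B) :
    signedSum (a + 1) φ = signedSum a φ + φ a := by
  simp only [signedSum]
  rcases le_or_gt 0 a with h | h
  · rw [← Finset.insert_Ico_right_eq_Ico_add_one h, Finset.sum_insert Finset.right_notMem_Ico,
      Finset.Ico_eq_empty_of_le h, Finset.Ico_eq_empty_of_le (by lia : 0 ≤ a + 1)]
    abel
  · rw [← Finset.insert_Ico_add_one_left_eq_Ico h, Finset.sum_insert (by simp),
      Finset.Ico_eq_empty_of_le h.le, Finset.Ico_eq_empty_of_le (by lia : a + 1 ≤ 0)]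
    abel

lemma eq_of_increments_eq {f g : ℤ → B} (h0 : f 0 = g 0)
    (h : ∀ a, f (a + 1) - f a = g (a + 1) - g a) (a : ℤ) : f a = g a := by
  induction a using Int.induction_on with
  | zero => exact h0
  | succ n ih => simpa [ih] using h n
  | pred n ih => simpa [ih] using h (-(n : ℤ) - 1)

lemma map_signedSum (L : B →+ C) (a : ℤ) (φ : ℤ → B) :
    L (signedSum a φ) = signedSum a (fun m => L (φ m)) := by
  simp [signedSum]

lemma sum_signedSum {ι : Type*} (s : Finset ι) (a : ℤ) (φ : ι → ℤ → B) :
    ∑ i ∈ s, signedSum a (φ i) = signedSum a (fun m => ∑ i ∈ s, φ i m) := by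
  simp only [signedSum, Finset.sum_sub_distrib, Finset.sum_comm (s := s)]

lemma signedSum_const (a : ℤ) (b : B) : signedSum a (fun _ => b) = a • b :=
  eq_of_increments_eq (f := fun a => signedSum a fun _ => b) (g := fun a => a • b)
    (by simp [signedSum_zero]) (fun a => by simp [signedSum_add_one, add_smul]) a

lemma signedSum_reflect (a : ℤ) (φ : ℤ → B) :
    signedSum a (fun m => φ (a - 1 - m)) = signedSum a φ := by
  simp only [signedSum]
  congr 1 <;>
  refine Finset.sum_nbij' (fun m => a - 1 - m) (fun m => a - 1 - m) ?_ ?_ ?_ ?_ ?_ <;>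
    simp <;> lia

end SignedSum

/-- Laurent polynomials in `z₁, …, z_N`, as the monoid algebra of the exponent lattice. -/
abbrev LaurentRing (N : ℕ) := AddMonoidAlgebra ℂ (Fin N → ℤ)

section Laurent

variable {N : ℕ}

/-- The linear operator multiplying the monomial `z^κ` by `w κ`. -/
def diagonalOp (w : (Fin N → ℤ) → ℂ) : LaurentRing N →ₗ[ℂ] LaurentRing N where
  toFun u := AddMonoidAlgebra.ofCoeff (w • u.coeff)
  map_add' u v := by ext κ; simp
  map_smul' c u := by ext κ; simp [mul_left_comm]

lemma coeff_diagonalOp (w : (Fin N → ℤ) → ℂ) (u : LaurentRing N) (κ : Fin N → ℤ) :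
    (diagonalOp w u).coeff κ = w κ * u.coeff κ := rfl

lemma diagonalOp_single (w : (Fin N → ℤ) → ℂ) (κ : Fin N → ℤ) (c : ℂ) :
    diagonalOp w (AddMonoidAlgebra.single κ c) = AddMonoidAlgebra.single κ (w κ * c) := by
  ext κ'
  rw [coeff_diagonalOp]
  by_cases h : κ = κ'
  · simp [h]
  · simp [h]

/-- The Euler derivation `z_j ∂/∂z_j`. -/
def eulerDeriv (j : Fin N) : Derivation ℂ (LaurentRing N) (LaurentRing N) :=
  Derivation.mk' (diagonalOp fun κ => (κ j : ℂ)) fun u v => by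
    induction u using AddMonoidAlgebra.induction_linear with
    | zero => simp
    | add a b ha hb => simp only [add_mul, map_add, ha, hb, smul_eq_mul]; ring
    | single κ c =>
      induction v using AddMonoidAlgebra.induction_linear with
      | zero => simp
      | add a b ha hb => simp only [mul_add, map_add, ha, hb, smul_eq_mul]; ring
      | single κ' c' =>
        simp only [diagonalOp_single, AddMonoidAlgebra.single_mul_single, smul_eq_mul,
          add_comm κ' κ, ← AddMonoidAlgebra.single_add, Pi.add_apply, Int.cast_add]
        congr 1
        ring

lemma eulerDeriv_single (j : Fin N) (κ : Fin N → ℤ) (c : ℂ) :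
    eulerDeriv j (AddMonoidAlgebra.single κ c) = AddMonoidAlgebra.single κ ((κ j : ℂ) * c) :=
  diagonalOp_single _ _ _

lemma coeff_eulerDeriv (j : Fin N) (u : LaurentRing N) (κ : Fin N → ℤ) :
    (eulerDeriv j u).coeff κ = κ j * u.coeff κ := rfl

/-- The monomial `z_j ^ a`. -/
def varZpow (j : Fin N) (a : ℤ) : LaurentRing N := AddMonoidAlgebra.single (Pi.single j a) 1

lemma varZpow_mul (j : Fin N) (a b : ℤ) : varZpow j a * varZpow j b = varZpow j (a + b) := by
  simp [varZpow, AddMonoidAlgebra.single_mul_single, Pi.single_add]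

lemma varZpow_zero (j : Fin N) : varZpow j 0 = 1 := by
  simp [varZpow, AddMonoidAlgebra.one_def]

lemma varZpow_one_pow (j : Fin N) (n : ℕ) : varZpow j 1 ^ n = varZpow j n := by
  induction n with
  | zero => simp [varZpow_zero]
  | succ n ih => rw [pow_succ, ih, varZpow_mul, Nat.cast_succ]

lemma prod_varZpow {ι : Type*} (s : Finset ι) (k : ι → Fin N) (a : ι → ℤ) :
    ∏ i ∈ s, varZpow (k i) (a i) =
      AddMonoidAlgebra.single (∑ i ∈ s, Pi.single (k i) (a i)) (1 : ℂ) := by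
  induction s using Finset.induction_on with
  | empty => simp [AddMonoidAlgebra.one_def]
  | insert i s hi ih =>
    rw [Finset.prod_insert hi, ih, varZpow, AddMonoidAlgebra.single_mul_single,
      Finset.sum_insert hi, one_mul]

lemma eulerDeriv_varZpow (j k : Fin N) (a : ℤ) :
    eulerDeriv j (varZpow k a) = if j = k then a • varZpow j a else 0 := by
  rw [varZpow, eulerDeriv_single]
  split_ifs with h
  · subst h; simp [varZpow]
  · simp [h]

/-- The power sum `z₁^a + ⋯ + z_N^a`. -/
def powerSum (N : ℕ) (a : ℤ) : LaurentRing N := ∑ j, varZpow j a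

lemma eulerDeriv_powerSum (j : Fin N) (a : ℤ) :
    eulerDeriv j (powerSum N a) = a • varZpow j a := by
  simp [powerSum, eulerDeriv_varZpow]

lemma varZpow_sub_varZpow (i k : Fin N) (a : ℤ) :
    varZpow k a - varZpow i a =
      (varZpow k 1 - varZpow i 1) * signedSum a fun m => varZpow k m * varZpow i (a - 1 - m) := by
  have homogenized (c : ℤ) : (varZpow k 1 - varZpow i 1) *
      signedSum a (fun m => varZpow k m * varZpow i (c - 1 - m)) =
        varZpow k a * varZpow i (c - a) - varZpow i c := by
    refine eq_of_increments_eq (f := fun a => (varZpow k 1 - varZpow i 1) *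
        signedSum a (fun m => varZpow k m * varZpow i (c - 1 - m)))
      (g := fun a => varZpow k a * varZpow i (c - a) - varZpow i c) ?_ (fun b => ?_) a
    · simp [signedSum_zero, varZpow_zero]
    · have hi : varZpow i (c - b) = varZpow i (c - 1 - b) * varZpow i 1 := by
        rw [varZpow_mul]; congr 1; ring
      have hc : c - (b + 1) = c - 1 - b := by ring
      simp only [signedSum_add_one, ← varZpow_mul k b 1, hi, hc]
      ring
  simpa [varZpow_zero] using (homogenized a).symm

end Laurent

section Vandermonde

variable {N : ℕ}

/-- The Vandermonde determinant `∏_{i < j} (z_j - z_i)`. -/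
def vandermondeDet (N : ℕ) : LaurentRing N :=
  (vandermonde fun j : Fin N => varZpow j 1).det

/-- The staircase exponent `(0, 1, …, N - 1)`. -/
def staircase (N : ℕ) : Fin N → ℤ := fun j => (j : ℤ)

lemma staircase_injective (N : ℕ) : Function.Injective (staircase N) := fun i j h =>
  Fin.ext (by simpa [staircase] using h)

lemma vandermondeDet_eq_prod (N : ℕ) :
    vandermondeDet N = ∏ i : Fin N, ∏ j ∈ Finset.Ioi i, (varZpow j 1 - varZpow i 1) :=
  det_vandermonde _

lemma vandermondeDet_eq_sum (N : ℕ) : vandermondeDet N = ∑ σ : Equiv.Perm (Fin N),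
    (σ.sign : ℤ) • (AddMonoidAlgebra.single (staircase N ∘ σ) (1 : ℂ) : LaurentRing N) := by
  rw [vandermondeDet, ← det_transpose, det_apply]
  refine Finset.sum_congr rfl fun σ _ => ?_
  have h := prod_varZpow Finset.univ id (staircase N ∘ σ)
  simp only [id, Finset.univ_sum_single] at h
  rw [← h]
  simp only [vandermonde, transpose_apply, of_apply, varZpow_one_pow]
  rfl

lemma coeff_vandermondeDet_staircase (N : ℕ) : (vandermondeDet N).coeff (staircase N) = 1 := by
  rw [vandermondeDet_eq_sum, AddMonoidAlgebra.coeff_sum, Finsupp.finsetSum_apply,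
    Finset.sum_eq_single 1]
  · simp
  · intro σ _ hσ
    have : staircase N ∘ σ ≠ staircase N := fun h =>
      hσ (Equiv.ext fun j => staircase_injective N (congrFun h j))
    simp [this]
  · simp

lemma vandermondeDet_ne_zero (N : ℕ) : vandermondeDet N ≠ 0 := fun h => by
  simpa [h] using coeff_vandermondeDet_staircase N

/-- The permutation action `z^κ ↦ z^(κ ∘ σ)` on Laurent polynomials. -/
def permAct (σ : Equiv.Perm (Fin N)) : LaurentRing N →ₐ[ℂ] LaurentRing N :=
  AddMonoidAlgebra.mapDomainAlgHom ℂ ℂ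
    ({ toFun := fun κ => κ ∘ σ, map_zero' := rfl, map_add' := fun _ _ => rfl } :
      (Fin N → ℤ) →+ (Fin N → ℤ))

lemma permAct_single (σ : Equiv.Perm (Fin N)) (κ : Fin N → ℤ) (c : ℂ) :
    permAct σ (AddMonoidAlgebra.single κ c) = AddMonoidAlgebra.single (κ ∘ σ) c := by
  simp [permAct]

lemma coeff_permAct (σ : Equiv.Perm (Fin N)) (u : LaurentRing N) (κ : Fin N → ℤ) :
    (permAct σ u).coeff (κ ∘ σ) = u.coeff κ := by
  induction u using AddMonoidAlgebra.induction_linear with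
  | zero => simp
  | add a b ha hb => simp [ha, hb]
  | single κ' c =>
    simp [permAct_single, Finsupp.single_apply, σ.surjective.injective_comp_right.eq_iff]

lemma permAct_varZpow (σ : Equiv.Perm (Fin N)) (j : Fin N) (a : ℤ) :
    permAct σ (varZpow j a) = varZpow (σ.symm j) a := by
  rw [varZpow, permAct_single, varZpow]
  congr 1
  ext k
  simp [Pi.single_apply, Equiv.eq_symm_apply]

lemma permAct_powerSum (σ : Equiv.Perm (Fin N)) (a : ℤ) :
    permAct σ (powerSum N a) = powerSum N a := by
  simp only [powerSum, map_sum, permAct_varZpow]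
  exact Equiv.sum_comp σ.symm fun j => varZpow j a

lemma permAct_vandermondeDet (σ : Equiv.Perm (Fin N)) :
    permAct σ (vandermondeDet N) = (σ.sign : ℤ) • vandermondeDet N := by
  have h : (permAct σ).mapMatrix (vandermonde fun j : Fin N => varZpow j 1) =
      (vandermonde fun j : Fin N => varZpow j 1).submatrix σ.symm id := by
    ext i j
    simp [vandermonde, permAct_varZpow]
  rw [vandermondeDet, AlgHom.map_det, h, det_permute, Equiv.Perm.sign_symm, zsmul_eq_mul]

/-- The quadratic Casimir weight `∑ κ_j (κ_j - (N - 1))` of an exponent. -/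
def casimirWeight (κ : Fin N → ℤ) : ℤ := ∑ j, κ j * (κ j - ((N : ℤ) - 1))

lemma casimirWeight_comp_perm (κ : Fin N → ℤ) (σ : Equiv.Perm (Fin N)) :
    casimirWeight (κ ∘ σ) = casimirWeight κ :=
  Equiv.sum_comp σ fun j => κ j * (κ j - ((N : ℤ) - 1))

lemma finset_eq_of_card_eq_of_sum_eq {α : Type*} [DecidableEq α] {φ : α → ℤ} {S T : Finset α}
    (hcard : T.card = S.card) (hsum : ∑ k ∈ T, φ k = ∑ k ∈ S, φ k)
    (hS : ∀ k ∈ S, φ k ≤ 0) (hT : ∀ k ∈ T \ S, 0 < φ k) : T = S := by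
  refine Finset.eq_of_subset_of_card_le (Finset.sdiff_eq_empty_iff_subset.mp ?_) hcard.ge
  by_contra hne
  have hpos := Finset.sum_pos hT (Finset.nonempty_iff_ne_empty.mpr hne)
  have hneg := Finset.sum_nonpos fun k (hk : k ∈ S \ T) => hS k (Finset.mem_sdiff.mp hk).1
  have hTS := Finset.sum_inter_add_sum_sdiff T S φ
  have hST := Finset.sum_inter_add_sum_sdiff S T φ
  rw [Finset.inter_comm] at hST
  linarith

lemma image_staircase (N : ℕ) : Finset.univ.image (staircase N) = Finset.Ico 0 (N : ℤ) := by
  ext k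
  simp only [Finset.mem_image, Finset.mem_univ, true_and, Finset.mem_Ico, staircase]
  constructor
  · rintro ⟨j, rfl⟩
    exact ⟨by simp, by exact_mod_cast j.2⟩
  · rintro ⟨h0, hN⟩
    exact ⟨⟨k.toNat, by lia⟩, by simpa using h0⟩

lemma image_eq_of_casimirWeight_eq {κ : Fin N → ℤ} (hκ : Function.Injective κ)
    (h : casimirWeight κ = casimirWeight (staircase N)) :
    Finset.univ.image κ = Finset.univ.image (staircase N) := by
  let φ : ℤ → ℤ := fun k => k * (k - ((N : ℤ) - 1))
  have weight_eq {ν : Fin N → ℤ} (hν : Function.Injective ν) :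
      casimirWeight ν = ∑ k ∈ Finset.univ.image ν, φ k := by
    rw [Finset.sum_image fun _ _ _ _ h => hν h]
    rfl
  refine finset_eq_of_card_eq_of_sum_eq (φ := φ) ?_ ?_ ?_ ?_
  · rw [Finset.card_image_of_injective _ hκ,
      Finset.card_image_of_injective _ (staircase_injective N)]
  · rw [← weight_eq hκ, ← weight_eq (staircase_injective N), h]
  · rw [image_staircase]
    intro k hk
    rw [Finset.mem_Ico] at hk
    exact mul_nonpos_of_nonneg_of_nonpos hk.1 (by lia)
  · rw [image_staircase]
    intro k hk
    obtain ⟨hkκ, hkN⟩ := Finset.mem_sdiff.mp hk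
    obtain ⟨j, -, -⟩ := Finset.mem_image.mp hkκ
    have hN := j.pos
    rw [Finset.mem_Ico, not_and, not_lt] at hkN
    rcases lt_or_ge k 0 with hneg | hnonneg
    · exact mul_pos_of_neg_of_neg hneg (by lia)
    · have := hkN hnonneg
      exact mul_pos (by lia) (by lia)

lemma exists_perm_of_casimirWeight_eq {κ : Fin N → ℤ} (hκ : Function.Injective κ)
    (h : casimirWeight κ = casimirWeight (staircase N)) :
    ∃ σ : Equiv.Perm (Fin N), κ = staircase N ∘ σ := by
  have hmem (j : Fin N) : ∃ i, staircase N i = κ j := by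
    have : κ j ∈ Finset.univ.image (staircase N) :=
      image_eq_of_casimirWeight_eq hκ h ▸ Finset.mem_image_of_mem κ (by simp)
    simpa using this
  choose s hs using hmem
  have hs_inj : Function.Injective s := fun i j hij => hκ (by rw [← hs, ← hs, hij])
  exact ⟨Equiv.ofBijective s (Finite.injective_iff_bijective.mp hs_inj),
    funext fun j => (hs j).symm⟩

end Vandermonde

section ChainRule

variable {R σ A M : Type*} [CommRing R] [CommRing A] [Algebra R A]

lemma mvPolynomial_induction_on_vars {motive : MvPolynomial σ R → Prop} (P : MvPolynomial σ R)
    (C : ∀ r, motive (MvPolynomial.C r)) (X : ∀ i ∈ P.vars, motive (MvPolynomial.X i))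
    (add : ∀ Q S, motive Q → motive S → motive (Q + S))
    (mul : ∀ Q S, motive Q → motive S → motive (Q * S)) : motive P := by
  refine Algebra.adjoin_induction (p := fun Q _ => motive Q) ?_ C (fun Q S _ _ => add Q S)
    (fun Q S _ _ => mul Q S) (MvPolynomial.mem_supported_vars P)
  rintro _ ⟨i, hi, rfl⟩
  exact X i hi

lemma sum_aeval_pderiv_X_smul [AddCommGroup M] [Module A M] (f : σ → A) (v : σ → M)
    {s : Finset σ} {i : σ} (hi : i ∈ s) :
    ∑ j ∈ s, MvPolynomial.aeval f (MvPolynomial.pderiv j (MvPolynomial.X i : MvPolynomial σ R)) •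
      v j = v i := by
  rw [Finset.sum_eq_single_of_mem i hi fun j _ hj => ?_]
  · simp
  · rw [MvPolynomial.pderiv_X_of_ne hj.symm, map_zero, zero_smul]

lemma sum_aeval_pderiv_mul_smul [AddCommGroup M] [Module A M] (f : σ → A) (v : σ → M)
    (s : Finset σ) (P Q : MvPolynomial σ R) :
    ∑ j ∈ s, MvPolynomial.aeval f (MvPolynomial.pderiv j (P * Q)) • v j =
      MvPolynomial.aeval f P • ∑ j ∈ s, MvPolynomial.aeval f (MvPolynomial.pderiv j Q) • v j +
      MvPolynomial.aeval f Q • ∑ j ∈ s, MvPolynomial.aeval f (MvPolynomial.pderiv j P) • v j := by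
  simp only [Finset.smul_sum, ← Finset.sum_add_distrib, smul_smul, ← add_smul]
  refine Finset.sum_congr rfl fun j _ => ?_
  rw [Derivation.leibniz, map_add, smul_eq_mul, smul_eq_mul, map_mul, map_mul]

lemma derivation_aeval [AddCommGroup M] [Module R M] [Module A M] (d : Derivation R A M)
    (f : σ → A) (P : MvPolynomial σ R) :
    d (MvPolynomial.aeval f P) =
      ∑ i ∈ P.vars, MvPolynomial.aeval f (MvPolynomial.pderiv i P) • d (f i) := by
  refine mvPolynomial_induction_on_vars (motive := fun Q => d (MvPolynomial.aeval f Q) =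
    ∑ i ∈ P.vars, MvPolynomial.aeval f (MvPolynomial.pderiv i Q) • d (f i)) P ?_ ?_ ?_ ?_
  · simp
  · intro i hi
    rw [sum_aeval_pderiv_X_smul f _ hi, MvPolynomial.aeval_X]
  · intro Q S hQ hS
    simp only [map_add, add_smul, Finset.sum_add_distrib, hQ, hS]
  · intro Q S hQ hS
    rw [map_mul, Derivation.leibniz, hQ, hS, sum_aeval_pderiv_mul_smul]

lemma hasDerivAt_aeval {γ : σ → ℝ → ℂ} {γ' : σ → ℂ} {t : ℝ}
    (hγ : ∀ i, HasDerivAt (γ i) (γ' i) t) (P : MvPolynomial σ ℂ) :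
    HasDerivAt (fun s => MvPolynomial.aeval (fun i => γ i s) P)
      (∑ i ∈ P.vars, MvPolynomial.aeval (fun i => γ i t) (MvPolynomial.pderiv i P) • γ' i) t := by
  refine mvPolynomial_induction_on_vars (motive := fun Q => HasDerivAt
    (fun s => MvPolynomial.aeval (fun i => γ i s) Q)
    (∑ i ∈ P.vars, MvPolynomial.aeval (fun i => γ i t) (MvPolynomial.pderiv i Q) • γ' i) t)
    P ?_ ?_ ?_ ?_
  · intro r
    simpa using hasDerivAt_const t r
  · intro i hi
    rw [sum_aeval_pderiv_X_smul _ _ hi]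
    simpa using hγ i
  · intro Q S hQ hS
    simpa [add_mul, Finset.sum_add_distrib] using hQ.fun_add hS
  · intro Q S hQ hS
    rw [sum_aeval_pderiv_mul_smul]
    simpa [add_comm, mul_comm] using hQ.fun_mul hS

end ChainRule

section Casimir

variable {N : ℕ}

/-- The Casimir operator, with eigenvalue `casimirWeight κ - casimirWeight (staircase N)` at
`z^κ`. -/
def casimir (N : ℕ) : LaurentRing N →ₗ[ℂ] LaurentRing N :=
  diagonalOp fun κ => ((casimirWeight κ - casimirWeight (staircase N) : ℤ) : ℂ)

lemma casimir_apply (u : LaurentRing N) :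
    casimir N u = ∑ j, (eulerDeriv j (eulerDeriv j u) - ((N : ℤ) - 1) • eulerDeriv j u) -
      casimirWeight (staircase N) • u := by
  ext κ
  simp only [casimir, coeff_diagonalOp, ← Int.cast_smul_eq_zsmul ℂ, AddMonoidAlgebra.coeff_sub,
    AddMonoidAlgebra.coeff_sum, AddMonoidAlgebra.coeff_smul, Finsupp.sub_apply,
    Finsupp.finsetSum_apply, Finsupp.smul_apply, coeff_eulerDeriv, smul_eq_mul]
  rw [Int.cast_sub, sub_mul, casimirWeight, Int.cast_sum, Finset.sum_mul]
  congr 1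
  refine Finset.sum_congr rfl fun j _ => ?_
  push_cast
  ring

lemma casimir_vandermondeDet (N : ℕ) : casimir N (vandermondeDet N) = 0 := by
  rw [vandermondeDet_eq_sum, map_sum]
  refine Finset.sum_eq_zero fun σ _ => ?_
  simp [casimir, diagonalOp_single, casimirWeight_comp_perm]

lemma casimir_vandermondeDet_mul (g : LaurentRing N) :
    casimir N (vandermondeDet N * g) =
      ∑ j, (2 * (eulerDeriv j (vandermondeDet N) * eulerDeriv j g) +
        vandermondeDet N * eulerDeriv j (eulerDeriv j g) -
        ((N : ℤ) - 1) • (vandermondeDet N * eulerDeriv j g)) := by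
  have hV := casimir_vandermondeDet N
  rw [casimir_apply, sub_eq_zero] at hV
  rw [casimir_apply, ← smul_mul_assoc, ← hV, Finset.sum_mul, ← Finset.sum_sub_distrib]
  refine Finset.sum_congr rfl fun j _ => ?_
  simp only [Derivation.leibniz, map_add, smul_eq_mul, zsmul_eq_mul]
  ring

/-- The vector field `∑ z_j ^ a · z_j ∂/∂z_j`. -/
def wittField (a : ℤ) : Derivation ℂ (LaurentRing N) (LaurentRing N) :=
  ∑ j, varZpow j a • eulerDeriv j

lemma wittField_apply (a : ℤ) (u : LaurentRing N) :
    wittField a u = ∑ j, varZpow j a * eulerDeriv j u := by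
  rw [wittField, ← Derivation.coeFnAddMonoidHom_apply, map_sum, Finset.sum_apply]
  rfl

lemma wittField_varZpow (a b : ℤ) (k : Fin N) :
    wittField a (varZpow k b) = b • varZpow k (a + b) := by
  simp only [wittField_apply, eulerDeriv_varZpow, mul_ite, mul_zero, Finset.sum_ite_eq',
    Finset.mem_univ, if_true, mul_smul_comm, varZpow_mul]

lemma wittField_powerSum (a b : ℤ) :
    wittField a (powerSum N b) = b • powerSum N (a + b) := by
  simp only [powerSum, map_sum, wittField_varZpow, Finset.smul_sum]

lemma derivation_prod_of_eigen {R A ι : Type*} [CommRing R] [CommRing A] [Algebra R A]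
    (d : Derivation R A A) {s : Finset ι} {u h : ι → A} (hu : ∀ i ∈ s, d (u i) = h i * u i) :
    d (∏ i ∈ s, u i) = (∑ i ∈ s, h i) * ∏ i ∈ s, u i := by
  induction s using Finset.induction_on with
  | empty => simp
  | insert i s hi ih =>
    rw [Finset.prod_insert hi, Finset.sum_insert hi, Derivation.leibniz,
      ih fun k hk => hu k (Finset.mem_insert_of_mem hk), hu i (Finset.mem_insert_self _ _)]
    simp only [smul_eq_mul]
    ring

/-- The complete homogeneous sum `∑_{0 ≤ m ≤ a} z_k ^ m z_i ^ (a - m)`, oriented for `a < 0`. -/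
def completeSum (a : ℤ) (k i : Fin N) : LaurentRing N :=
  signedSum (a + 1) fun m => varZpow k m * varZpow i (a - m)

lemma completeSum_symm (a : ℤ) (k i : Fin N) : completeSum a k i = completeSum a i k := by
  rw [completeSum, ← signedSum_reflect, completeSum]
  congr 1
  ext1 m
  rw [mul_comm]
  congr 2 <;> ring

lemma completeSum_self (a : ℤ) (k : Fin N) :
    completeSum a k k = (a + 1) • varZpow k a := by
  simp only [completeSum, varZpow_mul, add_sub_cancel, signedSum_const]

lemma wittField_varZpow_sub (a : ℤ) (k i : Fin N) :
    wittField a (varZpow k 1 - varZpow i 1) =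
      completeSum a k i * (varZpow k 1 - varZpow i 1) := by
  rw [map_sub, wittField_varZpow, wittField_varZpow, one_smul, one_smul, varZpow_sub_varZpow,
    mul_comm, completeSum]
  simp only [add_sub_right_comm a 1, sub_add_cancel]

lemma wittField_vandermondeDet (a : ℤ) :
    wittField a (vandermondeDet N) =
      (∑ i : Fin N, ∑ k ∈ Finset.Ioi i, completeSum a k i) * vandermondeDet N := by
  rw [vandermondeDet_eq_prod]
  exact derivation_prod_of_eigen _ fun i _ =>
    derivation_prod_of_eigen _ fun k _ => wittField_varZpow_sub a k i

lemma sum_sum_completeSum (N : ℕ) (a : ℤ) :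
    ∑ i : Fin N, ∑ k, completeSum a k i =
      signedSum a (fun m => powerSum N m * powerSum N (a - m)) + N * powerSum N a := by
  have hprod (m : ℤ) : ∑ i : Fin N, ∑ k, varZpow k m * varZpow i (a - m) =
      powerSum N m * powerSum N (a - m) := by
    rw [powerSum, powerSum, Finset.sum_mul_sum, Finset.sum_comm]
  simp only [completeSum, signedSum_add_one, Finset.sum_add_distrib, sum_signedSum, hprod]
  simp [varZpow_zero, powerSum, mul_comm]

lemma two_mul_sum_Ioi_completeSum (N : ℕ) (a : ℤ) :
    2 * ∑ i : Fin N, ∑ k ∈ Finset.Ioi i, completeSum a k i =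
      signedSum a (fun m => powerSum N m * powerSum N (a - m)) + N * powerSum N a -
        (a + 1) • powerSum N a := by
  have hoff := Finset.sum_sum_Ioi_add_eq_sum_sum_off_diag (α := Fin N) fun k i => completeSum a k i
  have hdiag : ∑ i : Fin N, completeSum a i i = (a + 1) • powerSum N a := by
    simp only [completeSum_self, powerSum, Finset.smul_sum]
  calc 2 * ∑ i : Fin N, ∑ k ∈ Finset.Ioi i, completeSum a k i
      = ∑ i : Fin N, ∑ k ∈ Finset.Ioi i, (completeSum a k i + completeSum a i k) := by
        simp only [completeSum_symm a _, two_mul, Finset.sum_add_distrib]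
    _ = ∑ i : Fin N, ∑ k, completeSum a k i - ∑ i : Fin N, completeSum a i i := by
        rw [hoff, ← Finset.sum_sub_distrib]
        refine Finset.sum_congr rfl fun i _ => ?_
        rw [← Finset.sum_compl_add_sum {i}, Finset.sum_singleton, add_sub_cancel_right]
    _ = _ := by rw [sum_sum_completeSum, hdiag]

lemma sum_vandermondeDet_varZpow_mul (a : ℤ) (c : LaurentRing N) :
    ∑ j, (2 * (eulerDeriv j (vandermondeDet N) * (varZpow j a * c)) +
        vandermondeDet N * eulerDeriv j (varZpow j a * c) -
        ((N : ℤ) - 1) • (vandermondeDet N * (varZpow j a * c))) =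
      vandermondeDet N *
        (signedSum a (fun m => powerSum N m * powerSum N (a - m)) * c + wittField a c) := by
  have hV : ∑ j, eulerDeriv j (vandermondeDet N) * (varZpow j a * c) =
      wittField a (vandermondeDet N) * c := by
    simp only [wittField_apply, Finset.sum_mul]
    exact Finset.sum_congr rfl fun j _ => by ring
  have hc : ∑ j, vandermondeDet N * eulerDeriv j (varZpow j a * c) =
      vandermondeDet N * (a • powerSum N a * c + wittField a c) := by
    simp only [Derivation.leibniz, eulerDeriv_varZpow, if_true, wittField_apply, powerSum,
      Finset.smul_sum, Finset.sum_mul, ← Finset.sum_add_distrib, ← Finset.mul_sum, smul_eq_mul]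
    congr 1
    exact Finset.sum_congr rfl fun j _ => by ring
  have hN : ∑ j, vandermondeDet N * (varZpow j a * c) = vandermondeDet N * (powerSum N a * c) := by
    simp only [powerSum, Finset.sum_mul, Finset.mul_sum]
  rw [Finset.sum_sub_distrib, Finset.sum_add_distrib, ← Finset.smul_sum, ← Finset.mul_sum, hV, hc,
    hN, wittField_vandermondeDet]
  have h := two_mul_sum_Ioi_completeSum N a
  simp only [zsmul_eq_mul] at h ⊢
  push_cast at h ⊢
  linear_combination vandermondeDet N * c * h

end Casimir

section LoopOperators

variable {N : ℕ}

/-- Evaluation of a polynomial in formal power sums `p_b`, `b ∈ ℤ`, as a Laurent polynomial. -/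
def powerSumEval (N : ℕ) : MvPolynomial ℤ ℂ →ₐ[ℂ] LaurentRing N := MvPolynomial.aeval (powerSum N)

/-- The loop operator `P ↦ (∑_{0 ≤ m < a} p_m p_{a-m}) P + ∑_b b p_{a+b} ∂P/∂p_b`. -/
def loopOp (a : ℤ) (P : MvPolynomial ℤ ℂ) : MvPolynomial ℤ ℂ :=
  signedSum a (fun m => MvPolynomial.X m * MvPolynomial.X (a - m)) * P +
    MvPolynomial.mkDerivation ℂ (fun b => b • MvPolynomial.X (a + b)) P

/-- The Casimir operator on polynomials in formal power sums, assembled from loop operators. -/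
def loopCasimir (P : MvPolynomial ℤ ℂ) : MvPolynomial ℤ ℂ :=
  ∑ b ∈ P.vars, b • loopOp b (MvPolynomial.pderiv b P)

lemma powerSumEval_X (a : ℤ) : powerSumEval N (MvPolynomial.X a) = powerSum N a :=
  MvPolynomial.aeval_X _ _

lemma powerSumEval_mkDerivation (a : ℤ) (P : MvPolynomial ℤ ℂ) :
    powerSumEval N (MvPolynomial.mkDerivation ℂ (fun b => b • MvPolynomial.X (a + b)) P) =
      wittField a (powerSumEval N P) := by
  induction P using MvPolynomial.induction_on with
  | C r =>
    rw [MvPolynomial.derivation_C, map_zero, powerSumEval, MvPolynomial.aeval_C,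
      Derivation.map_algebraMap]
  | add P Q hP hQ => simp only [map_add, hP, hQ]
  | mul_X P b hP =>
    simp only [Derivation.leibniz, map_add, map_mul, smul_eq_mul, hP, MvPolynomial.mkDerivation_X,
      map_zsmul, powerSumEval_X, wittField_powerSum]

lemma powerSumEval_loopOp (a : ℤ) (P : MvPolynomial ℤ ℂ) :
    powerSumEval N (loopOp a P) =
      signedSum a (fun m => powerSum N m * powerSum N (a - m)) * powerSumEval N P +
        wittField a (powerSumEval N P) := by
  have h := map_signedSum (powerSumEval N : MvPolynomial ℤ ℂ →+ LaurentRing N) a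
    fun m => MvPolynomial.X m * MvPolynomial.X (a - m)
  simp only [AddMonoidHom.coe_coe, map_mul, powerSumEval_X] at h
  rw [loopOp, map_add, map_mul, h, powerSumEval_mkDerivation]

lemma eulerDeriv_powerSumEval (j : Fin N) (P : MvPolynomial ℤ ℂ) :
    eulerDeriv j (powerSumEval N P) =
      ∑ b ∈ P.vars, b • (varZpow j b * powerSumEval N (MvPolynomial.pderiv b P)) := by
  rw [powerSumEval, derivation_aeval]
  refine Finset.sum_congr rfl fun b _ => ?_
  rw [eulerDeriv_powerSum, smul_eq_mul, mul_smul_comm, mul_comm]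

lemma casimir_vandermondeDet_mul_powerSumEval (P : MvPolynomial ℤ ℂ) :
    casimir N (vandermondeDet N * powerSumEval N P) =
      vandermondeDet N * powerSumEval N (loopCasimir P) := by
  rw [casimir_vandermondeDet_mul, loopCasimir, map_sum, Finset.mul_sum]
  simp only [map_zsmul, mul_smul_comm, powerSumEval_loopOp, ← sum_vandermondeDet_varZpow_mul,
    Finset.smul_sum]
  rw [Finset.sum_comm]
  refine Finset.sum_congr rfl fun j _ => ?_
  simp only [eulerDeriv_powerSumEval j P, map_sum, map_zsmul, Finset.mul_sum, Finset.smul_sum,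
    ← Finset.sum_add_distrib, ← Finset.sum_sub_distrib]
  refine Finset.sum_congr rfl fun b _ => ?_
  simp only [zsmul_eq_mul]
  ring

lemma permAct_powerSumEval (σ : Equiv.Perm (Fin N)) (P : MvPolynomial ℤ ℂ) :
    permAct σ (powerSumEval N P) = powerSumEval N P := by
  have : (permAct σ).comp (powerSumEval N) = powerSumEval N :=
    MvPolynomial.algHom_ext fun a => by simp [powerSumEval_X, permAct_powerSum]
  exact DFunLike.congr_fun this P

end LoopOperators

section Uniqueness

variable {N : ℕ}

lemma coeff_comp_perm_of_permAct_eq_smul {u : LaurentRing N}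
    (hu : ∀ σ : Equiv.Perm (Fin N), permAct σ u = (σ.sign : ℤ) • u) (σ : Equiv.Perm (Fin N))
    (κ : Fin N → ℤ) : u.coeff (κ ∘ σ) = (σ.sign : ℤ) * u.coeff κ := by
  have h : u.coeff κ = (σ.sign : ℤ) * u.coeff (κ ∘ σ) := by
    rw [← coeff_permAct σ, hu, ← Int.cast_smul_eq_zsmul ℂ, AddMonoidAlgebra.coeff_smul,
      Finsupp.smul_apply, smul_eq_mul]
  rw [h, ← mul_assoc, ← Int.cast_mul, ← Units.val_mul, Int.units_mul_self]
  simp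

lemma injective_of_coeff_ne_zero {u : LaurentRing N}
    (hu : ∀ σ : Equiv.Perm (Fin N), permAct σ u = (σ.sign : ℤ) • u) {κ : Fin N → ℤ}
    (hκ : u.coeff κ ≠ 0) : Function.Injective κ := by
  intro i j hij
  by_contra hne
  have hswap : κ ∘ Equiv.swap i j = κ := by
    rw [Equiv.comp_swap_eq_update, hij, Function.update_eq_self, ← hij, Function.update_eq_self]
  have h := coeff_comp_perm_of_permAct_eq_smul hu (Equiv.swap i j) κ
  rw [hswap, Equiv.Perm.sign_swap hne] at h
  exact hκ (self_eq_neg.mp (by simpa using h))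

lemma eq_coeff_staircase_smul_vandermondeDet {u : LaurentRing N}
    (hu : ∀ σ : Equiv.Perm (Fin N), permAct σ u = (σ.sign : ℤ) • u) (hcas : casimir N u = 0) :
    u = u.coeff (staircase N) • vandermondeDet N := by
  set v := u - u.coeff (staircase N) • vandermondeDet N with hv
  have hv_anti (σ : Equiv.Perm (Fin N)) : permAct σ v = (σ.sign : ℤ) • v := by
    rw [hv, map_sub, map_smul, hu, permAct_vandermondeDet, smul_sub, smul_comm]
  have hv_cas : casimir N v = 0 := by
    rw [hv, map_sub, map_smul, hcas, casimir_vandermondeDet, smul_zero, sub_zero]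
  have hv_stair : v.coeff (staircase N) = 0 := by
    simp [hv, coeff_vandermondeDet_staircase]
  suffices v = 0 from sub_eq_zero.mp this
  ext κ
  by_contra hκ
  have hκ0 : v.coeff κ ≠ 0 := hκ
  have hweight : (casimir N v).coeff κ = 0 := by rw [hv_cas]; rfl
  rw [casimir, coeff_diagonalOp, mul_eq_zero, Int.cast_eq_zero, sub_eq_zero] at hweight
  obtain ⟨σ, rfl⟩ := exists_perm_of_casimirWeight_eq (injective_of_coeff_ne_zero hv_anti hκ0)
    (hweight.resolve_right hκ0)
  rw [coeff_comp_perm_of_permAct_eq_smul hv_anti, hv_stair, mul_zero] at hκ0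
  exact hκ0 rfl

lemma permAct_vandermondeDet_mul_powerSumEval (P : MvPolynomial ℤ ℂ) (σ : Equiv.Perm (Fin N)) :
    permAct σ (vandermondeDet N * powerSumEval N P) =
      (σ.sign : ℤ) • (vandermondeDet N * powerSumEval N P) := by
  rw [map_mul, permAct_vandermondeDet, permAct_powerSumEval, smul_mul_assoc]

lemma coeff_vandermondeDet_mul_loopCasimir (P : MvPolynomial ℤ ℂ) (κ : Fin N → ℤ) :
    (vandermondeDet N * powerSumEval N (loopCasimir P)).coeff κ =
      ((casimirWeight κ - casimirWeight (staircase N) : ℤ) : ℂ) *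
        (vandermondeDet N * powerSumEval N P).coeff κ := by
  rw [← casimir_vandermondeDet_mul_powerSumEval, casimir, coeff_diagonalOp]

/-- Functionals on polynomials in formal power sums that factor through evaluation at `N`
variables and are annihilated by all loop operators. -/
structure IsLoopFunctional (N : ℕ) (Φ : MvPolynomial ℤ ℂ →ₗ[ℂ] ℂ) : Prop where
  map_eq_zero : ∀ P, powerSumEval N P = 0 → Φ P = 0
  map_loopOp : ∀ a P, Φ (loopOp a P) = 0

variable {Φ : MvPolynomial ℤ ℂ →ₗ[ℂ] ℂ}

lemma IsLoopFunctional.map_loopCasimir (hΦ : IsLoopFunctional N Φ) (P : MvPolynomial ℤ ℂ) :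
    Φ (loopCasimir P) = 0 := by
  simp only [loopCasimir, map_sum, map_zsmul, hΦ.map_loopOp, smul_zero, Finset.sum_const_zero]

lemma IsLoopFunctional.apply_of_casimir_eq_zero (hΦ : IsLoopFunctional N Φ)
    {P : MvPolynomial ℤ ℂ} (hP : casimir N (vandermondeDet N * powerSumEval N P) = 0) :
    Φ P = (vandermondeDet N * powerSumEval N P).coeff (staircase N) * Φ 1 := by
  set w := (vandermondeDet N * powerSumEval N P).coeff (staircase N)
  have hu := eq_coeff_staircase_smul_vandermondeDet
    (permAct_vandermondeDet_mul_powerSumEval P) hP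
  have hev : powerSumEval N (P - w • 1) = 0 := by
    refine mul_left_cancel₀ (vandermondeDet_ne_zero N) ?_
    rw [map_sub, map_smul, map_one, mul_sub, mul_smul_comm, mul_one, mul_zero, ← hu, sub_self]
  rw [← sub_eq_zero, ← smul_eq_mul, ← map_smul, ← map_sub]
  exact hΦ.map_eq_zero _ hev

/-- Each nonzero Casimir eigenvalue `x` is removed by `P ↦ P - x⁻¹ loopCasimir P`, which changes
neither `Φ` nor the coefficient at the staircase. -/
lemma IsLoopFunctional.apply_of_casimirWeight_mem (hΦ : IsLoopFunctional N Φ) (Λ : Finset ℤ)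
    (P : MvPolynomial ℤ ℂ)
    (hP : ∀ κ, (vandermondeDet N * powerSumEval N P).coeff κ ≠ 0 →
      casimirWeight κ - casimirWeight (staircase N) ∈ insert 0 Λ) :
    Φ P = (vandermondeDet N * powerSumEval N P).coeff (staircase N) * Φ 1 := by
  induction Λ using Finset.induction_on generalizing P with
  | empty =>
    refine hΦ.apply_of_casimir_eq_zero ?_
    ext κ
    by_cases hκ : (vandermondeDet N * powerSumEval N P).coeff κ = 0
    · rw [casimir, coeff_diagonalOp, hκ, mul_zero]
      rfl
    · have hweight := Finset.mem_singleton.mp (hP κ hκ)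
      rw [casimir, coeff_diagonalOp, hweight, Int.cast_zero, zero_mul]
      rfl
  | insert x Λ _ ih =>
    by_cases hx : x = 0
    · exact ih P fun κ hκ => by simpa [hx] using hP κ hκ
    set Q := P - (x : ℂ)⁻¹ • loopCasimir P with hQ
    have hQ_coeff (κ : Fin N → ℤ) : (vandermondeDet N * powerSumEval N Q).coeff κ =
        (1 - (x : ℂ)⁻¹ * ((casimirWeight κ - casimirWeight (staircase N) : ℤ) : ℂ)) *
          (vandermondeDet N * powerSumEval N P).coeff κ := by
      rw [hQ, map_sub, map_smul, mul_sub, mul_smul_comm, AddMonoidAlgebra.coeff_sub,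
        AddMonoidAlgebra.coeff_smul, Finsupp.sub_apply, Finsupp.smul_apply,
        coeff_vandermondeDet_mul_loopCasimir, smul_eq_mul]
      ring
    have hΦQ : Φ Q = Φ P := by simp [hQ, hΦ.map_loopCasimir]
    have hQ_stair := hQ_coeff (staircase N)
    rw [sub_self, Int.cast_zero, mul_zero, sub_zero, one_mul] at hQ_stair
    rw [← hΦQ, ← hQ_stair]
    refine ih Q fun κ hκ => ?_
    rw [hQ_coeff] at hκ
    have hne : casimirWeight κ - casimirWeight (staircase N) ≠ x := fun h => by
      rw [h, inv_mul_cancel₀ (by exact_mod_cast hx), sub_self, zero_mul] at hκ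
      exact hκ rfl
    have := hP κ (right_ne_zero_of_mul hκ)
    simp only [Finset.mem_insert] at this ⊢
    tauto

theorem IsLoopFunctional.apply_eq (hΦ : IsLoopFunctional N Φ) (P : MvPolynomial ℤ ℂ) :
    Φ P = (vandermondeDet N * powerSumEval N P).coeff (staircase N) * Φ 1 := by
  refine hΦ.apply_of_casimirWeight_mem ((vandermondeDet N * powerSumEval N P).coeff.support.image
    fun κ => casimirWeight κ - casimirWeight (staircase N)) P fun κ hκ => ?_
  exact Finset.mem_insert_of_mem (Finset.mem_image_of_mem _ (Finsupp.mem_support_iff.mpr hκ))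

end Uniqueness

section Spectrum

variable {n K : Type*} [Fintype n] [DecidableEq n] [Field K] {A : Matrix n n K} {c : n → K}

lemma charpoly_eq_prod_of_det_one_sub_smul [Infinite K]
    (h : ∀ s : K, (1 - s • A).det = ∏ j, (1 - s * c j)) :
    A.charpoly = ∏ j, (Polynomial.X - Polynomial.C (c j)) := by
  refine mul_left_cancel₀ (Polynomial.X_ne_zero (R := K)) (Polynomial.funext fun x => ?_)
  rw [Polynomial.eval_mul, Polynomial.eval_mul, Polynomial.eval_X]
  rcases eq_or_ne x 0 with rfl | hx
  · rw [zero_mul, zero_mul]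
  have hscale : scalar n x - A = x • (1 - x⁻¹ • A) := by
    rw [smul_sub, smul_smul, mul_inv_cancel₀ hx, one_smul, smul_one_eq_diagonal, scalar_apply]
  rw [eval_charpoly, hscale, det_smul, h, ← Finset.card_univ, ← Finset.prod_const,
    ← Finset.prod_mul_distrib, Polynomial.eval_prod]
  congr 1
  refine Finset.prod_congr rfl fun j _ => ?_
  rw [Polynomial.eval_sub, Polynomial.eval_X, Polynomial.eval_C]
  field_simp

lemma det_sub_algebraMap_of_charpoly_eq
    (h : A.charpoly = ∏ j, (Polynomial.X - Polynomial.C (c j))) (r : K) :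
    (A - algebraMap K _ r).det = ∏ j, (c j - r) := by
  have hr := congrArg (Polynomial.eval r) h
  rw [eval_charpoly, Polynomial.eval_prod] at hr
  rw [← neg_sub, det_neg, show algebraMap K (Matrix n n K) r = scalar n r from rfl, hr,
    ← Finset.card_univ, ← Finset.prod_const, ← Finset.prod_mul_distrib]
  simp

variable [IsAlgClosed K]

lemma det_aeval_of_charpoly_eq (h : A.charpoly = ∏ j, (Polynomial.X - Polynomial.C (c j)))
    (p : Polynomial K) : (Polynomial.aeval A p).det = ∏ j, p.eval (c j) := by
  rw [(IsAlgClosed.splits p).eq_prod_roots]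
  generalize p.roots = roots
  induction roots using Multiset.induction_on with
  | empty => simp [Algebra.algebraMap_eq_smul_one]
  | cons r roots ih =>
    rw [Multiset.map_cons, Multiset.prod_cons, mul_left_comm, map_mul, det_mul, ih, map_sub,
      Polynomial.aeval_X, Polynomial.aeval_C, det_sub_algebraMap_of_charpoly_eq h]
    simp [Finset.prod_mul_distrib]

lemma charpoly_pow_of_charpoly_eq (h : A.charpoly = ∏ j, (Polynomial.X - Polynomial.C (c j)))
    (k : ℕ) : (A ^ k).charpoly = ∏ j, (Polynomial.X - Polynomial.C (c j ^ k)) := by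
  refine Polynomial.funext fun x => ?_
  have hdet := det_aeval_of_charpoly_eq h (Polynomial.C x - Polynomial.X ^ k)
  rw [map_sub, map_pow, Polynomial.aeval_X, Polynomial.aeval_C] at hdet
  rw [eval_charpoly, show scalar n x = algebraMap K (Matrix n n K) x from rfl, hdet,
    Polynomial.eval_prod]
  simp

lemma trace_pow_of_charpoly_eq (h : A.charpoly = ∏ j, (Polynomial.X - Polynomial.C (c j)))
    (k : ℕ) : (A ^ k).trace = ∑ j, c j ^ k := by
  rw [trace_eq_sum_roots_charpoly, charpoly_pow_of_charpoly_eq h,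
    Polynomial.roots_prod _ _ (Finset.prod_ne_zero_iff.mpr fun _ _ => Polynomial.X_sub_C_ne_zero _)]
  simp only [Polynomial.roots_X_sub_C, Multiset.bind_singleton]
  rfl

end Spectrum

section Eigenangles

variable {N : ℕ}

/-- Evaluation of a Laurent polynomial at the point `e^{2πix}` of the torus. -/
def torusEval (x : UnitAddTorus (Fin N)) : LaurentRing N →ₐ[ℂ] ℂ :=
  AddMonoidAlgebra.lift ℂ ℂ (Fin N → ℤ)
    { toFun := fun κ => UnitAddTorus.mFourier κ.toAdd x
      map_one' := by rw [toAdd_one, UnitAddTorus.mFourier_zero, ContinuousMap.one_apply]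
      map_mul' := fun _ _ => UnitAddTorus.mFourier_add }

lemma torusEval_single (x : UnitAddTorus (Fin N)) (κ : Fin N → ℤ) (c : ℂ) :
    torusEval x (AddMonoidAlgebra.single κ c) = c * UnitAddTorus.mFourier κ x := by
  simp [torusEval, AddMonoidAlgebra.lift_single]

lemma torusEval_varZpow (x : UnitAddTorus (Fin N)) (j : Fin N) (a : ℤ) :
    torusEval x (varZpow j a) = fourier a (x j) := by
  rw [varZpow, torusEval_single, one_mul, UnitAddTorus.mFourier, ContinuousMap.coe_mk,
    Finset.prod_eq_single j (fun i _ hij => by rw [Pi.single_eq_of_ne hij, fourier_zero]) (by simp),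
    Pi.single_eq_same]

/-- The numbers `e^{2πi x_j}` are the eigenvalues of `X`, listed with multiplicity. -/
def HasEigenangles (X : unitaryGroup (Fin N) ℂ) (x : UnitAddTorus (Fin N)) : Prop :=
  ∀ s, Lam X s = ∏ j, (1 - s * fourier (-1) (x j))

lemma trace_inv_zpow (X : unitaryGroup (Fin N) ℂ) (a : ℤ) :
    ((X ^ (-a) : unitaryGroup (Fin N) ℂ) : Matrix (Fin N) (Fin N) ℂ).trace =
      star ((X ^ a : unitaryGroup (Fin N) ℂ) : Matrix (Fin N) (Fin N) ℂ).trace := by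
  rw [_root_.zpow_neg, ← trace_conjTranspose]
  rfl

lemma HasEigenangles.trace_zpow {X : unitaryGroup (Fin N) ℂ} {x : UnitAddTorus (Fin N)}
    (hx : HasEigenangles X x) (a : ℤ) :
    ((X ^ a : unitaryGroup (Fin N) ℂ) : Matrix (Fin N) (Fin N) ℂ).trace =
      torusEval x (powerSum N a) := by
  have hpow (k : ℕ) : ((X ^ (-k : ℤ) : unitaryGroup (Fin N) ℂ) : Matrix (Fin N) (Fin N) ℂ).trace =
      ∑ j, fourier (-k : ℤ) (x j) := by
    have h := trace_pow_of_charpoly_eq (charpoly_eq_prod_of_det_one_sub_smul hx) k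
    rw [_root_.zpow_neg, zpow_natCast, ← inv_pow]
    refine h.trans (Finset.sum_congr rfl fun j _ => ?_)
    rw [fourier_apply, fourier_apply, neg_smul, neg_smul, one_smul, natCast_zsmul, ← smul_neg,
      AddCircle.toCircle_nsmul, Circle.coe_pow]
  rw [powerSum, map_sum]
  simp only [torusEval_varZpow]
  obtain ⟨k, rfl | rfl⟩ := a.eq_nat_or_neg
  · rw [← neg_neg (k : ℤ), trace_inv_zpow, hpow, star_sum]
    simp only [fourier_neg, RCLike.star_def]
  · exact hpow k

/-- The polynomial in the traces `tr (X ^ b)`, `b ∈ ℤ`, prescribed by a polynomial in power sums. -/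
def traceEval (X : unitaryGroup (Fin N) ℂ) : MvPolynomial ℤ ℂ →ₐ[ℂ] ℂ :=
  MvPolynomial.aeval fun b =>
    ((X ^ b : unitaryGroup (Fin N) ℂ) : Matrix (Fin N) (Fin N) ℂ).trace

lemma HasEigenangles.traceEval_eq {X : unitaryGroup (Fin N) ℂ} {x : UnitAddTorus (Fin N)}
    (hx : HasEigenangles X x) (P : MvPolynomial ℤ ℂ) :
    traceEval X P = torusEval x (powerSumEval N P) := by
  have : traceEval X = (torusEval x).comp (powerSumEval N) :=
    MvPolynomial.algHom_ext fun a => by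
      rw [traceEval, MvPolynomial.aeval_X, hx.trace_zpow, AlgHom.comp_apply, powerSumEval_X]
  exact DFunLike.congr_fun this P

end Eigenangles

section UnitsDerivative

variable {R : Type*} [NormedRing R] [NormedAlgebra ℝ R] [HasSummableGeomSeries R]

lemma hasDerivAt_units_inv {u : ℝ → Rˣ} {D : R} {t : ℝ} (hu : HasDerivAt (fun s => (u s : R)) D t) :
    HasDerivAt (fun s => (((u s)⁻¹ : Rˣ) : R)) (-(((u t)⁻¹ : Rˣ) * D * ((u t)⁻¹ : Rˣ))) t := by
  have h := (hasFDerivAt_ringInverse (𝕜 := ℝ) (u t)).comp_hasDerivAt t hu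
  simpa only [Function.comp_def, Ring.inverse_unit] using! h

lemma hasDerivAt_units_zpow {u : ℝ → Rˣ} {D : R} {t : ℝ} (hu : HasDerivAt (fun s => (u s : R)) D t)
    (a : ℤ) :
    HasDerivAt (fun s => ((u s ^ a : Rˣ) : R))
      (signedSum a fun m => ((u t ^ m : Rˣ) : R) * D * ((u t ^ (a - 1 - m) : Rˣ) : R)) t := by
  set S : ℤ → R := fun a =>
    signedSum a fun m => ((u t ^ m : Rˣ) : R) * D * ((u t ^ (a - 1 - m) : Rˣ) : R) with hS
  have hS_add_one (a : ℤ) : S (a + 1) = S a * u t + ((u t ^ a : Rˣ) : R) * D := by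
    have h := map_signedSum (AddMonoidHom.mulRight (u t : R)) a
      fun m => ((u t ^ m : Rˣ) : R) * D * ((u t ^ (a - 1 - m) : Rˣ) : R)
    simp only [AddMonoidHom.mulRight_apply, mul_assoc, ← Units.val_mul, ← _root_.zpow_add_one,
      sub_right_comm a 1, sub_add_cancel] at h
    simp only [hS, signedSum_add_one, mul_assoc, h, add_sub_cancel_right, sub_self, zpow_zero,
      Units.val_one, mul_one, sub_right_comm a 1]
  change HasDerivAt _ (S a) t
  induction a using Int.induction_on with
  | zero => simpa [hS, signedSum_zero] using hasDerivAt_const t (1 : R)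
  | succ n ih =>
    rw [hS_add_one]
    simpa only [_root_.zpow_add_one, Units.val_mul] using ih.fun_mul hu
  | pred n ih =>
    have hS_pred : S (-n) = S (-n - 1) * u t + ((u t ^ (-n - 1 : ℤ) : Rˣ) : R) * D := by
      rw [← hS_add_one, sub_add_cancel]
    have hmul := ih.fun_mul (hasDerivAt_units_inv hu)
    simp only [← Units.val_mul, ← _root_.zpow_sub_one] at hmul
    convert hmul using 1
    rw [hS_pred, add_mul, mul_assoc (S _), Units.mul_inv, mul_one, mul_neg, ← mul_assoc,
      ← mul_assoc, ← Units.val_mul, ← _root_.zpow_sub_one, add_neg_cancel_right]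

end UnitsDerivative

section HaarIntegrationByParts

variable {G : Type*} [Group G] [TopologicalSpace G] [IsTopologicalGroup G] [CompactSpace G]
  [MeasurableSpace G] [BorelSpace G] (μ : Measure G) [IsFiniteMeasure μ] [μ.IsMulLeftInvariant]

lemma integral_deriv_mul_left_eq_zero {A : ℝ → G} (hA : ∀ s t, A (s + t) = A s * A t)
    {F F' : G → ℂ} (hF : Continuous F) (hF' : Continuous F')
    (hderiv : ∀ x, HasDerivAt (fun t => F (A t * x)) (F' x) 0) : ∫ x, F' x ∂μ = 0 := by
  have hA0 : A 0 = 1 := by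
    have h := hA 0 0
    rwa [add_zero, left_eq_mul] at h
  obtain ⟨C, hC⟩ := isCompact_univ.exists_bound_of_continuousOn hF'.continuousOn
  have hderiv_at (x : G) (t : ℝ) : HasDerivAt (fun s => F (A s * x)) (F' (A t * x)) t := by
    have h := HasDerivAt.comp_sub_const t t (by simpa only [sub_self] using hderiv (A t * x))
    simpa only [← mul_assoc, ← hA, sub_add_cancel] using h
  have hint (t : ℝ) : Integrable (fun x => F (A t * x)) μ :=
    (hF.comp (continuous_const_mul (A t))).integrable_of_hasCompactSupport (.of_compactSpace _)
  have hder := (hasDerivAt_integral_of_dominated_loc_of_deriv_le (μ := μ) (x₀ := 0)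
    (bound := fun _ => C) Filter.univ_mem
    (.of_forall fun t => (hint t).aestronglyMeasurable) (hint 0)
    (hF'.comp (continuous_const_mul (A 0))).aestronglyMeasurable
    (.of_forall fun x t _ => hC _ trivial) (integrable_const C)
    (.of_forall fun x t _ => hderiv_at x t)).2
  simp only [integral_mul_left_eq_self F, hA0, one_mul] at hder
  exact hder.unique (hasDerivAt_const 0 _)

end HaarIntegrationByParts

section SelfAdjoint

variable {α A : Type*} [MeasurableSpace α] {μ : Measure α} [AddCommGroup A] [Module ℂ A]
  [StarAddMonoid A] [StarModule ℂ A]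

lemma integral_apply_eq_zero_of_selfAdjoint {φ : α → A →ₗ[ℂ] ℂ}
    (hint : ∀ H, Integrable (fun x => φ x H) μ)
    (hφ : ∀ H : selfAdjoint A, ∫ x, φ x (Complex.I • (H : A)) ∂μ = 0) (H : A) :
    ∫ x, φ x H ∂μ = 0 := by
  have hself (K : selfAdjoint A) : ∫ x, φ x K ∂μ = 0 := by
    have h := hφ K
    simp only [map_smul, MeasureTheory.integral_smul] at h
    exact (smul_eq_zero_iff_right Complex.I_ne_zero).mp h
  rw [← realPart_add_I_smul_imaginaryPart H]
  simp only [map_add, map_smul]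
  rw [integral_add (hint _) ((hint _).fun_smul _), MeasureTheory.integral_smul, hself, hself,
    smul_zero, add_zero]

end SelfAdjoint

section UnitaryGroup

variable {N : ℕ}

instance (N : ℕ) : BorelSpace (Matrix (Fin N) (Fin N) ℂ) :=
  inferInstanceAs (BorelSpace (Fin N → Fin N → ℂ))

instance (N : ℕ) : BorelSpace (unitaryGroup (Fin N) ℂ) := Subtype.borelSpace _

instance {n : Type*} [Fintype n] [DecidableEq n] : CompactSpace (unitaryGroup n ℂ) := by
  refine isCompact_iff_compactSpace.mp ?_
  have hbox : IsCompact (Set.univ.pi fun _ : n => Set.univ.pi fun _ : n =>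
      Metric.closedBall (0 : ℂ) 1) :=
    isCompact_univ_pi fun _ => isCompact_univ_pi fun _ => isCompact_closedBall 0 1
  have hclosed : IsClosed (unitaryGroup n ℂ : Set (Matrix n n ℂ)) := by
    have : (unitaryGroup n ℂ : Set (Matrix n n ℂ)) = {M | M * star M = 1} :=
      Set.ext fun _ => mem_unitaryGroup_iff
    rw [this]
    exact isClosed_eq (continuous_id.mul continuous_star) continuous_const
  refine hbox.of_isClosed_subset hclosed fun M hM i _ j _ => ?_
  simpa using entry_norm_bound_of_unitary hM i j

lemma continuous_coe_zpow (a : ℤ) :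
    Continuous fun X : unitaryGroup (Fin N) ℂ =>
      ((X ^ a : unitaryGroup (Fin N) ℂ) : Matrix (Fin N) (Fin N) ℂ) :=
  continuous_subtype_val.comp (continuous_zpow a)

/-- The derivative of `X ^ a` when `X` moves with left velocity `H`, that is, with `dX = H X`. -/
def zpowVariation (a : ℤ) (X : unitaryGroup (Fin N) ℂ) :
    Matrix (Fin N) (Fin N) ℂ →ₗ[ℂ] Matrix (Fin N) (Fin N) ℂ :=
  signedSum a fun m => LinearMap.mulLeftRight ℂ ((X ^ m : unitaryGroup (Fin N) ℂ).1,
    (X ^ (a - m) : unitaryGroup (Fin N) ℂ).1)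

lemma zpowVariation_apply (a : ℤ) (X : unitaryGroup (Fin N) ℂ) (H : Matrix (Fin N) (Fin N) ℂ) :
    zpowVariation a X H = signedSum a fun m => (X ^ m : unitaryGroup (Fin N) ℂ).1 * H *
      (X ^ (a - m) : unitaryGroup (Fin N) ℂ).1 :=
  map_signedSum (LinearMap.applyₗ (R := ℂ) (M₂ := Matrix (Fin N) (Fin N) ℂ) H).toAddMonoidHom a _

lemma trace_zpowVariation (a : ℤ) (X : unitaryGroup (Fin N) ℂ) (H : Matrix (Fin N) (Fin N) ℂ) :
    (zpowVariation a X H).trace = a • (H * (X ^ a : unitaryGroup (Fin N) ℂ).1).trace := by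
  have h := map_signedSum (traceAddMonoidHom (Fin N) ℂ) a fun m =>
    (X ^ m : unitaryGroup (Fin N) ℂ).1 * H * (X ^ (a - m) : unitaryGroup (Fin N) ℂ).1
  rw [traceAddMonoidHom_apply, ← zpowVariation_apply] at h
  rw [h, ← signedSum_const]
  congr 1
  funext m
  rw [traceAddMonoidHom_apply, mul_assoc, trace_mul_comm, mul_assoc, ← Submonoid.coe_mul,
    ← _root_.zpow_add, sub_add_cancel]

lemma continuous_zpowVariation_apply (a : ℤ) (H : Matrix (Fin N) (Fin N) ℂ) :
    Continuous fun X : unitaryGroup (Fin N) ℂ => zpowVariation a X H := by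
  have hterm (m : ℤ) : Continuous fun X : unitaryGroup (Fin N) ℂ =>
      (X ^ m : unitaryGroup (Fin N) ℂ).1 * H * (X ^ (a - m) : unitaryGroup (Fin N) ℂ).1 :=
    ((continuous_coe_zpow m).mul continuous_const).mul (continuous_coe_zpow (a - m))
  simp only [zpowVariation_apply, signedSum]
  exact (continuous_finsetSum _ fun m _ => hterm m).sub (continuous_finsetSum _ fun m _ => hterm m)

lemma sum_zpowVariation_single (a : ℤ) (X : unitaryGroup (Fin N) ℂ) :
    ∑ i, ∑ j, zpowVariation a X (single i j 1) i j = signedSum a fun m =>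
      (X ^ m : unitaryGroup (Fin N) ℂ).1.trace *
        (X ^ (a - m) : unitaryGroup (Fin N) ℂ).1.trace := by
  have hentry (i j : Fin N) : zpowVariation a X (single i j 1) i j = signedSum a fun m =>
      (X ^ m : unitaryGroup (Fin N) ℂ).1 i i * (X ^ (a - m) : unitaryGroup (Fin N) ℂ).1 j j := by
    rw [zpowVariation_apply]
    refine (map_signedSum (entryAddMonoidHom ℂ i j) a _).trans ?_
    simp [mul_apply, single_apply, ite_and]
  simp only [hentry, sum_signedSum, trace, diag_apply, Finset.sum_mul_sum]

end UnitaryGroup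

section LeftVariation

open scoped Matrix.Norms.L2Operator

variable {N : ℕ}

/-- `F' X` is the complex-linear extension of the derivative of `F` at `X` along the left
translations by the one-parameter groups `t ↦ exp (t H)`, `H` skew-Hermitian. -/
structure HasLeftVariation (F : unitaryGroup (Fin N) ℂ → ℂ)
    (F' : unitaryGroup (Fin N) ℂ → Matrix (Fin N) (Fin N) ℂ →ₗ[ℂ] ℂ) : Prop where
  continuous : Continuous F
  continuous_variation : ∀ H, Continuous fun X => F' X H
  hasDerivAt : ∀ (X) (H : selfAdjoint (Matrix (Fin N) (Fin N) ℂ)),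
    HasDerivAt (fun t : ℝ => F (selfAdjoint.expUnitary (t • H) * X)) (F' X (Complex.I • H.1)) 0

lemma HasLeftVariation.mul {F G : unitaryGroup (Fin N) ℂ → ℂ}
    {F' G' : unitaryGroup (Fin N) ℂ → Matrix (Fin N) (Fin N) ℂ →ₗ[ℂ] ℂ}
    (hF : HasLeftVariation F F') (hG : HasLeftVariation G G') :
    HasLeftVariation (fun X => F X * G X) (fun X => G X • F' X + F X • G' X) where
  continuous := hF.continuous.mul hG.continuous
  continuous_variation H := (hG.continuous.smul (hF.continuous_variation H)).add
    (hF.continuous.smul (hG.continuous_variation H))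
  hasDerivAt X H := by
    have h := (hF.hasDerivAt X H).fun_mul (hG.hasDerivAt X H)
    rw [zero_smul, selfAdjoint.expUnitary_zero, one_mul] at h
    simpa only [LinearMap.add_apply, LinearMap.smul_apply, smul_eq_mul, mul_comm] using h

lemma HasLeftVariation.sum {ι : Type*} (s : Finset ι) {F : ι → unitaryGroup (Fin N) ℂ → ℂ}
    {F' : ι → unitaryGroup (Fin N) ℂ → Matrix (Fin N) (Fin N) ℂ →ₗ[ℂ] ℂ}
    (hF : ∀ i, HasLeftVariation (F i) (F' i)) :
    HasLeftVariation (fun X => ∑ i ∈ s, F i X) (fun X => ∑ i ∈ s, F' i X) where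
  continuous := continuous_finsetSum _ fun i _ => (hF i).continuous
  continuous_variation H := by
    simp only [LinearMap.sum_apply]
    exact continuous_finsetSum _ fun i _ => (hF i).continuous_variation H
  hasDerivAt X H := by
    rw [LinearMap.sum_apply]
    exact HasDerivAt.fun_sum fun i _ => (hF i).hasDerivAt X H

lemma HasLeftVariation.integral_eq_zero (μ : Measure (unitaryGroup (Fin N) ℂ)) [IsFiniteMeasure μ]
    [μ.IsMulLeftInvariant] {F : unitaryGroup (Fin N) ℂ → ℂ}
    {F' : unitaryGroup (Fin N) ℂ → Matrix (Fin N) (Fin N) ℂ →ₗ[ℂ] ℂ}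
    (hF : HasLeftVariation F F') (H : Matrix (Fin N) (Fin N) ℂ) : ∫ X, F' X H ∂μ = 0 := by
  refine integral_apply_eq_zero_of_selfAdjoint (fun K => (hF.continuous_variation K)
    |>.integrable_of_hasCompactSupport (.of_compactSpace _)) (fun K => ?_) H
  refine integral_deriv_mul_left_eq_zero μ (A := fun t => selfAdjoint.expUnitary (t • K))
    (fun s t => ?_) hF.continuous (hF.continuous_variation _) (hF.hasDerivAt · K)
  rw [add_smul]
  exact (((Commute.refl K.1).smul_left s).smul_right t).expUnitary_add

lemma hasDerivAt_expUnitary_mul (X : unitaryGroup (Fin N) ℂ)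
    (H : selfAdjoint (Matrix (Fin N) (Fin N) ℂ)) :
    HasDerivAt (fun t : ℝ => (selfAdjoint.expUnitary (t • H) * X : unitaryGroup (Fin N) ℂ).1)
      (Complex.I • H.1 * X.1) 0 := by
  have h := (hasDerivAt_exp_smul_const (𝕂 := ℝ) (Complex.I • H.1) 0).mul_const X.1
  rw [zero_smul, NormedSpace.exp_zero, one_mul] at h
  simpa only [smul_comm _ Complex.I] using! h

lemma hasLeftVariation_zpow_apply (a : ℤ) (i j : Fin N) :
    HasLeftVariation (fun X => (X ^ a : unitaryGroup (Fin N) ℂ).1 i j)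
      (fun X => entryLinearMap ℂ ℂ i j ∘ₗ zpowVariation a X) where
  continuous := (continuous_coe_zpow a).matrix_elem i j
  continuous_variation H := (continuous_zpowVariation_apply a H).matrix_elem i j
  hasDerivAt X H := by
    have h := hasDerivAt_units_zpow
      (u := fun t : ℝ => Unitary.toUnits (selfAdjoint.expUnitary (t • H) * X))
      (hasDerivAt_expUnitary_mul X H) a
    simp only [zero_smul, selfAdjoint.expUnitary_zero, one_mul, ← map_zpow,
      Unitary.val_toUnits_apply] at h
    have hvariation : zpowVariation a X (Complex.I • H.1) = signedSum a fun m =>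
        (X ^ m : unitaryGroup (Fin N) ℂ).1 * (Complex.I • H.1 * X.1) *
          (X ^ (a - 1 - m) : unitaryGroup (Fin N) ℂ).1 := by
      rw [zpowVariation_apply]
      congr 1
      funext m
      rw [mul_assoc, mul_assoc, mul_assoc, ← Submonoid.coe_mul, ← _root_.zpow_one_add]
      congr 4
      ring
    rw [LinearMap.comp_apply, hvariation]
    exact ((entryLinearMap ℂ ℂ i j).toContinuousLinearMap.restrictScalars ℝ).hasFDerivAt
      |>.comp_hasDerivAt 0 h

lemma hasLeftVariation_trace_zpow (a : ℤ) :
    HasLeftVariation (fun X => (X ^ a : unitaryGroup (Fin N) ℂ).1.trace)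
      (fun X => traceLinearMap (Fin N) ℂ ℂ ∘ₗ zpowVariation a X) := by
  convert HasLeftVariation.sum Finset.univ fun i : Fin N => hasLeftVariation_zpow_apply a i i
    using 2 with X X
  · rfl
  · exact LinearMap.ext fun H => by simp [trace]

/-- The derivative of `X ↦ traceEval X P` when `X` moves with left velocity `H`. -/
def traceEvalVariation (P : MvPolynomial ℤ ℂ) (X : unitaryGroup (Fin N) ℂ) :
    Matrix (Fin N) (Fin N) ℂ →ₗ[ℂ] ℂ :=
  ∑ b ∈ P.vars, traceEval X (MvPolynomial.pderiv b P) •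
    (traceLinearMap (Fin N) ℂ ℂ ∘ₗ zpowVariation b X)

lemma continuous_traceEval (P : MvPolynomial ℤ ℂ) :
    Continuous fun X : unitaryGroup (Fin N) ℂ => traceEval X P := by
  induction P using MvPolynomial.induction_on with
  | C c => simpa only [MvPolynomial.aeval_C, traceEval] using continuous_const
  | add P Q hP hQ => simpa only [map_add] using! hP.add hQ
  | mul_X P b hP =>
    simpa only [map_mul, traceEval, MvPolynomial.aeval_X] using!
      hP.mul (hasLeftVariation_trace_zpow b).continuous

lemma hasLeftVariation_traceEval (P : MvPolynomial ℤ ℂ) :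
    HasLeftVariation (N := N) (fun X => traceEval X P) (traceEvalVariation P) where
  continuous := continuous_traceEval P
  continuous_variation H := by
    simp only [traceEvalVariation, LinearMap.sum_apply, LinearMap.smul_apply]
    exact continuous_finsetSum _ fun b _ => (continuous_traceEval _).smul
      ((hasLeftVariation_trace_zpow b).continuous_variation H)
  hasDerivAt X H := by
    have h := hasDerivAt_aeval
      (fun b => (hasLeftVariation_trace_zpow (N := N) b).hasDerivAt X H) P
    simp only [zero_smul, selfAdjoint.expUnitary_zero, one_mul] at h
    simpa only [traceEvalVariation, LinearMap.sum_apply, LinearMap.smul_apply] using! h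

lemma traceEval_X (X : unitaryGroup (Fin N) ℂ) (b : ℤ) :
    traceEval X (MvPolynomial.X b) = (X ^ b : unitaryGroup (Fin N) ℂ).1.trace :=
  MvPolynomial.aeval_X _ b

lemma sum_zpow_mul_traceEvalVariation_single (a : ℤ) (P : MvPolynomial ℤ ℂ)
    (X : unitaryGroup (Fin N) ℂ) :
    ∑ i, ∑ j, (X ^ a : unitaryGroup (Fin N) ℂ).1 i j * traceEvalVariation P X (single i j 1) =
      traceEval X (MvPolynomial.mkDerivation ℂ (fun b => b • MvPolynomial.X (a + b)) P) := by
  have hb (b : ℤ) : ∑ i, ∑ j, (X ^ a : unitaryGroup (Fin N) ℂ).1 i j *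
      (zpowVariation b X (single i j 1)).trace =
        b • (X ^ (a + b) : unitaryGroup (Fin N) ℂ).1.trace := by
    rw [_root_.zpow_add, Submonoid.coe_mul, trace]
    simp only [trace_zpowVariation, trace_single_mul, one_smul, diag_apply, mul_apply,
      mul_smul_comm, Finset.smul_sum]
  have hderivation := derivation_aeval
    (MvPolynomial.mkDerivation ℂ fun b => b • (MvPolynomial.X (a + b) : MvPolynomial ℤ ℂ))
    MvPolynomial.X P
  simp only [MvPolynomial.aeval_X_left_apply, MvPolynomial.mkDerivation_X] at hderivation
  rw [hderivation, map_sum]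
  simp only [smul_eq_mul, map_mul, map_zsmul, traceEval_X, ← hb, traceEvalVariation,
    LinearMap.sum_apply, LinearMap.smul_apply, LinearMap.comp_apply, traceLinearMap_apply,
    Finset.mul_sum]
  rw [Finset.sum_comm_cycle]
  simp only [mul_left_comm]

lemma sum_variation_eq_traceEval_loopOp (a : ℤ) (P : MvPolynomial ℤ ℂ)
    (X : unitaryGroup (Fin N) ℂ) :
    ∑ i, ∑ j, (traceEval X P * zpowVariation a X (single i j 1) i j +
      (X ^ a : unitaryGroup (Fin N) ℂ).1 i j * traceEvalVariation P X (single i j 1)) =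
      traceEval X (loopOp a P) := by
  have h := map_signedSum (traceEval X : MvPolynomial ℤ ℂ →+ ℂ) a
    fun m => MvPolynomial.X m * MvPolynomial.X (a - m)
  simp only [AddMonoidHom.coe_coe, map_mul, traceEval_X] at h
  rw [loopOp, map_add, map_mul, h, ← sum_zpow_mul_traceEvalVariation_single,
    ← sum_zpowVariation_single, mul_comm, Finset.mul_sum, ← Finset.sum_add_distrib]
  exact Finset.sum_congr rfl fun i _ => by rw [Finset.mul_sum, ← Finset.sum_add_distrib]

section LoopEquation

variable (μ : Measure (unitaryGroup (Fin N) ℂ))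

lemma integrable_traceEval [IsFiniteMeasure μ] (P : MvPolynomial ℤ ℂ) :
    Integrable (fun X => traceEval X P) μ :=
  (continuous_traceEval P).integrable_of_hasCompactSupport (.of_compactSpace _)

theorem integral_traceEval_loopOp [IsFiniteMeasure μ] [μ.IsMulLeftInvariant] (a : ℤ)
    (P : MvPolynomial ℤ ℂ) :
    ∫ X, traceEval X (loopOp a P) ∂μ = 0 := by
  have hentry (i j : Fin N) :=
    (hasLeftVariation_zpow_apply a i j).mul (hasLeftVariation_traceEval P)
  have hint (i j : Fin N) : Integrable (fun X =>
      traceEval X P * zpowVariation a X (single i j 1) i j +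
        (X ^ a : unitaryGroup (Fin N) ℂ).1 i j * traceEvalVariation P X (single i j 1)) μ :=
    ((hentry i j).continuous_variation _).integrable_of_hasCompactSupport (.of_compactSpace _)
  simp only [← sum_variation_eq_traceEval_loopOp]
  rw [integral_finsetSum _ fun i _ => integrable_finsetSum _ fun j _ => hint i j]
  refine Finset.sum_eq_zero fun i _ => ?_
  rw [integral_finsetSum _ fun j _ => hint i j]
  exact Finset.sum_eq_zero fun j _ => (hentry i j).integral_eq_zero μ _

theorem integral_traceEval [IsProbabilityMeasure μ] [μ.IsMulLeftInvariant]
    {x : unitaryGroup (Fin N) ℂ → UnitAddTorus (Fin N)} (hx : ∀ X, HasEigenangles X (x X))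
    (P : MvPolynomial ℤ ℂ) :
    ∫ X, traceEval X P ∂μ = (vandermondeDet N * powerSumEval N P).coeff (staircase N) := by
  let Φ : MvPolynomial ℤ ℂ →ₗ[ℂ] ℂ :=
    { toFun := fun P => ∫ X, traceEval X P ∂μ
      map_add' := fun P Q => by
        simp only [map_add]
        exact integral_add (integrable_traceEval μ P) (integrable_traceEval μ Q)
      map_smul' := fun c P => by
        simp only [map_smul, RingHom.id_apply]
        exact MeasureTheory.integral_smul c _ }
  have hΦ : IsLoopFunctional N Φ :=
    { map_eq_zero := fun P hP => by
        simp only [Φ, LinearMap.coe_mk, AddHom.coe_mk, (hx _).traceEval_eq, hP, map_zero,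
          integral_zero]
      map_loopOp := integral_traceEval_loopOp μ }
  have hone : Φ 1 = 1 := by simp [Φ]
  rw [← mul_one (AddMonoidAlgebra.coeff _ _), ← hone, ← hΦ.apply_eq P]
  rfl

end LoopEquation

end LeftVariation

section Embeddings

lemma sum_embedding_option {ι κ M : Type*} [Fintype ι] [Fintype κ] [AddCommGroup M]
    (g : (ι ↪ κ) → κ → M) :
    ∑ k : Option ι ↪ κ, g (Function.Embedding.some.trans k) (k none) =
      ∑ k : ι ↪ κ, (∑ j, g k j - ∑ i, g k (k i)) := by
  refine ((Function.Embedding.optionEmbeddingEquiv ι κ).sum_comp fun p => g p.1 p.2.1).trans ?_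
  rw [Fintype.sum_sigma]
  refine Finset.sum_congr rfl fun k _ => ?_
  have hrange : ∑ j : Set.range k, g k j = ∑ i, g k (k i) :=
    (Equiv.sum_comp (Equiv.ofInjective k k.injective) fun j : Set.range k => g k j).symm
  rw [eq_sub_iff_add_eq', ← hrange]
  convert Fintype.sum_subtype_add_sum_subtype (· ∈ Set.range k) (g k)

/-- The sum of the monomials `∏ᵢ z_{kᵢ} ^ aᵢ` over the families `k` of pairwise distinct
variables. -/
def embeddingSum (N : ℕ) {ι : Type*} [Fintype ι] (a : ι → ℤ) : LaurentRing N :=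
  ∑ k : ι ↪ Fin N, ∏ i, varZpow (k i) (a i)

variable {N : ℕ} {ι : Type*}

lemma embeddingSum_comp_equiv {κ : Type*} [Fintype ι] [Fintype κ] (e : ι ≃ κ) (a : κ → ℤ) :
    embeddingSum N (a ∘ e) = embeddingSum N a := by
  refine Fintype.sum_equiv (e.embeddingCongr (Equiv.refl _)) _ _ fun k => ?_
  exact Fintype.prod_equiv e _ _ fun i => by simp

lemma prod_varZpow_mul_varZpow [Fintype ι] (k : ι → Fin N) (a : ι → ℤ) (i : ι) (b : ℤ) :
    (∏ i', varZpow (k i') (a i')) * varZpow (k i) b =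
      ∏ i', varZpow (k i') ((a + Pi.single i b : ι → ℤ) i') := by
  simp only [Pi.add_apply, ← varZpow_mul, Finset.prod_mul_distrib]
  congr 1
  rw [Finset.prod_eq_single i (fun i' _ hi' => by rw [Pi.single_eq_of_ne hi', varZpow_zero])
    (by simp), Pi.single_eq_same]

lemma embeddingSum_option [Fintype ι] (a : Option ι → ℤ) :
    embeddingSum N a = powerSum N (a none) * embeddingSum N (a ∘ some) -
      ∑ i, embeddingSum N (a ∘ some + Pi.single i (a none)) := by
  have h := sum_embedding_option fun (k : ι ↪ Fin N) j =>
    (∏ i, varZpow (k i) (a (some i))) * varZpow j (a none)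
  simp only [Function.Embedding.trans_apply, Function.Embedding.some_apply] at h
  simp only [embeddingSum, Fintype.prod_option, mul_comm (varZpow _ (a none)), h,
    ← Finset.mul_sum, Finset.sum_sub_distrib, prod_varZpow_mul_varZpow]
  rw [← Finset.sum_mul, mul_comm, powerSum, Finset.sum_comm]
  rfl

lemma embeddingSum_mem_range_powerSumEval [Fintype ι] (a : ι → ℤ) :
    embeddingSum N a ∈ (powerSumEval N).range := by
  revert a
  refine Fintype.induction_empty_option (P := fun ι _ => ∀ a : ι → ℤ,
    embeddingSum N a ∈ (powerSumEval N).range) ?_ ?_ ?_ ι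
  · intro ι κ _ e ih a
    let _ := Fintype.ofEquiv κ e.symm
    simpa only [embeddingSum_comp_equiv] using ih (a ∘ e)
  · intro a
    simp [embeddingSum]
  · intro ι _ ih a
    rw [embeddingSum_option]
    exact sub_mem (mul_mem ⟨.X (a none), powerSumEval_X _⟩ (ih _)) (sum_mem fun i _ => ih _)

end Embeddings

section Coefficient

lemma det_eq_det_submatrix_of_eq_one {m n R : Type*} [Fintype m] [DecidableEq m] [Fintype n]
    [DecidableEq n] [CommRing R] (k : m ↪ n) (M : Matrix n n R)
    (h : ∀ j ∉ Set.range k, ∀ i, M i j = (1 : Matrix n n R) i j) :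
    M.det = (M.submatrix k k).det := by
  rw [M.twoBlockTriangular_det' (· ∈ Set.range k) fun i hi j hj => by
    rw [h j hj, one_apply_ne (by rintro rfl; exact hj hi)]]
  have hone : (M.toSquareBlockProp fun i => i ∉ Set.range k) = 1 := by
    ext i j
    simp only [toSquareBlockProp_def, of_apply, h j j.2, one_apply, Subtype.ext_iff]
  rw [hone, det_one, mul_one]
  convert (det_submatrix_equiv_self (Equiv.ofInjective k k.injective)
    (M.toSquareBlockProp (· ∈ Set.range k))).symm
  rfl

variable {N : ℕ} {ι : Type*} [Fintype ι]

lemma coeff_vandermondeDet_mul_single (c : Fin N → ℤ) :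
    (vandermondeDet N * AddMonoidAlgebra.single c 1).coeff (staircase N) =
      (of fun l j : Fin N => if (l : ℤ) + c j = j then (1 : ℂ) else 0).det := by
  rw [vandermondeDet_eq_sum, Finset.sum_mul, det_apply, AddMonoidAlgebra.coeff_sum,
    Finsupp.finsetSum_apply]
  refine Finset.sum_congr rfl fun σ _ => ?_
  simp only [← Int.cast_smul_eq_zsmul ℂ, Units.smul_def, smul_mul_assoc,
    AddMonoidAlgebra.single_mul_single, one_mul, of_apply, Fintype.prod_ite_zero]
  simp [Finsupp.single_apply, funext_iff, staircase]

lemma coeff_vandermondeDet_mul_embeddingSum (a : ι → ℤ) :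
    (vandermondeDet N * embeddingSum N a).coeff (staircase N) =
      ∑ k : ι ↪ Fin N, (of fun i i' : ι => if (k i : ℤ) + a i' = k i' then (1 : ℂ) else 0).det := by
  rw [embeddingSum, Finset.mul_sum, AddMonoidAlgebra.coeff_sum, Finsupp.finsetSum_apply]
  refine Finset.sum_congr rfl fun k _ => ?_
  have hexponent (i : ι) : (∑ i', Pi.single (k i') (a i') : Fin N → ℤ) (k i) = a i := by
    simp [Finset.sum_apply, Pi.single_apply]
  rw [prod_varZpow, coeff_vandermondeDet_mul_single, det_eq_det_submatrix_of_eq_one k]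
  · congr 1
    ext i i'
    simp only [submatrix_apply, of_apply, hexponent]
  · intro j hj i
    have hj' : (∑ i', Pi.single (k i') (a i') : Fin N → ℤ) j = 0 := by
      rw [Finset.sum_apply]
      exact Finset.sum_eq_zero fun i' _ => Pi.single_eq_of_ne (fun h => hj ⟨i', h.symm⟩) _
    simp only [of_apply, hj', add_zero, one_apply, Fin.ext_iff, Nat.cast_inj]

end Coefficient

section Torus

variable {ι : Type*} [Fintype ι]

instance : IsProbabilityMeasure (volume : Measure UnitAddCircle) :=
  ⟨by simp [AddCircle.measure_univ]⟩

lemma integral_fourier (n : ℤ) :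
    ∫ t : UnitAddCircle, fourier n t = if n = 0 then 1 else 0 := by
  split_ifs with hn
  · simp [hn]
  · exact integral_eq_zero_of_add_right_eq_neg (fourier_add_half_inv_index hn one_pos)

lemma integral_mFourier (a : ι → ℤ) :
    ∫ y : UnitAddTorus ι, UnitAddTorus.mFourier a y = if a = 0 then 1 else 0 := by
  simp only [UnitAddTorus.mFourier, ContinuousMap.coe_mk]
  rw [integral_fintype_prod_volume_eq_prod]
  simp only [integral_fourier, Fintype.prod_ite_zero, Finset.prod_const_one, funext_iff,
    Pi.zero_apply]

/-- The Fourier kernel `∑_{l < N} e^{2πilt}` of the determinantal process of eigenangles. -/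
def fourierKernel (N : ℕ) : C(UnitAddCircle, ℂ) := ∑ l : Fin N, fourier (l : ℤ)

lemma prod_fourier_sub (k : ι → ℤ) (σ : Equiv.Perm ι) (y : UnitAddTorus ι) :
    ∏ i, fourier (k i) (y (σ i) - y i) = UnitAddTorus.mFourier (k ∘ σ.symm - k) y := by
  have hsub (n : ℤ) (s t : UnitAddCircle) : fourier n (s - t) = fourier n s * fourier (-n) t := by
    rw [fourier_apply, smul_sub, sub_eq_add_neg, AddCircle.toCircle_add, Circle.coe_mul,
      fourier_apply, fourier_apply, neg_smul]
  have hperm := Equiv.prod_comp σ fun j => fourier (k (σ.symm j)) (y j)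
  simp only [Equiv.symm_apply_apply] at hperm
  rw [sub_eq_add_neg, UnitAddTorus.mFourier_add]
  simp only [hsub, Finset.prod_mul_distrib, hperm]
  rfl

lemma prod_fourierKernel_sub (N : ℕ) (σ : Equiv.Perm ι) (y : UnitAddTorus ι) :
    ∏ i, fourierKernel N (y (σ i) - y i) =
      ∑ k : ι → Fin N, UnitAddTorus.mFourier (fun i => ((k (σ.symm i) : ℤ) - k i)) y := by
  simp only [fourierKernel, ContinuousMap.coe_sum, Finset.sum_apply, Fintype.prod_sum]
  exact Finset.sum_congr rfl fun k _ => prod_fourier_sub _ σ y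

/-- The `n`-level correlation density of the eigenangles of a Haar unitary matrix. -/
def correlationDensity (N : ℕ) (y : UnitAddTorus ι) : ℂ :=
  (of fun i j => fourierKernel N (y i - y j)).det

lemma continuous_correlationDensity (N : ℕ) :
    Continuous (correlationDensity N : UnitAddTorus ι → ℂ) := by
  refine Continuous.matrix_det (continuous_matrix fun i j => ?_)
  exact (fourierKernel N).continuous.comp ((continuous_apply i).sub (continuous_apply j))

lemma integral_correlationDensity_mul_mFourier (N : ℕ) (a : ι → ℤ) :
    ∫ y : UnitAddTorus ι, correlationDensity N y * UnitAddTorus.mFourier a y =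
      ∑ k : ι ↪ Fin N, (of fun i i' : ι => if (k i : ℤ) + a i' = k i' then (1 : ℂ) else 0).det := by
  have hexpand (y : UnitAddTorus ι) : correlationDensity N y * UnitAddTorus.mFourier a y =
      ∑ k : ι → Fin N, ∑ σ : Equiv.Perm ι, ((σ.sign : ℤ) : ℂ) *
        UnitAddTorus.mFourier (fun i => ((k (σ.symm i) : ℤ) - k i) + a i) y := by
    simp only [correlationDensity, det_apply', of_apply, prod_fourierKernel_sub, Finset.sum_mul,
      Finset.mul_sum, mul_assoc, ← UnitAddTorus.mFourier_add]
    exact Finset.sum_comm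
  have hint (b : ι → ℤ) (c : ℂ) :
      Integrable fun y : UnitAddTorus ι => c * UnitAddTorus.mFourier b y :=
    (continuous_const.mul (UnitAddTorus.mFourier b).continuous).integrable_of_hasCompactSupport
      (.of_compactSpace _)
  have hterm (k : ι → Fin N) : ∫ y : UnitAddTorus ι, ∑ σ : Equiv.Perm ι, ((σ.sign : ℤ) : ℂ) *
      UnitAddTorus.mFourier (fun i => ((k (σ.symm i) : ℤ) - k i) + a i) y =
        (of fun i i' : ι => if (k i : ℤ) + a i' = k i' then (1 : ℂ) else 0).det := by
    rw [integral_finsetSum _ fun σ _ => hint _ _, det_apply', ← Equiv.sum_comp (Equiv.inv _)]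
    refine Finset.sum_congr rfl fun σ _ => ?_
    rw [MeasureTheory.integral_const_mul, integral_mFourier]
    simp [Fintype.prod_ite_zero, funext_iff, sub_add_eq_add_sub, sub_eq_zero,
      Equiv.Perm.inv_def]
  simp only [hexpand]
  rw [integral_finsetSum _ fun k _ => integrable_finsetSum _ fun σ _ => hint _ _]
  simp only [hterm]
  refine (Fintype.sum_of_injective (fun k : ι ↪ Fin N => (k : ι → Fin N)) DFunLike.coe_injective
    _ _ (fun k hk => ?_) fun k => rfl).symm
  obtain ⟨i, j, hij, hne⟩ := Function.not_injective_iff.mp fun h => hk ⟨⟨k, h⟩, rfl⟩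
  exact det_zero_of_row_eq hne (by ext; simp [hij])

end Torus

section EquiLipschitzFamilies

open scoped NNReal

variable {α E : Type*} [PseudoMetricSpace E] {T : α → E → ℂ} {K : ℝ≥0}

lemma isClosed_setOf_continuous_of_lipschitzWith [TopologicalSpace α]
    (hT : ∀ x, LipschitzWith K (T x)) : IsClosed {φ | Continuous fun x => T x φ} := by
  refine isClosed_of_closure_subset fun φ hφ => continuous_of_uniform_approx_of_continuous
    fun u hu => ?_
  obtain ⟨ε, hε, hεu⟩ := Metric.mem_uniformity_dist.mp hu
  obtain ⟨δ, hδ, hKδ⟩ := exists_pos_mul_lt hε (K : ℝ)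
  obtain ⟨ψ, hψ, hdist⟩ := Metric.mem_closure_iff.mp hφ δ hδ
  refine ⟨fun x => T x ψ, hψ, fun x => hεu ?_⟩
  calc dist (T x φ) (T x ψ) ≤ K * dist φ ψ := (hT x).dist_le_mul φ ψ
    _ ≤ K * δ := by gcongr
    _ < ε := hKδ

lemma continuous_integral_of_lipschitzWith [MeasurableSpace α] {μ : Measure α}
    [IsFiniteMeasure μ] (hint : ∀ φ, Integrable (fun x => T x φ) μ)
    (hT : ∀ x, LipschitzWith K (T x)) : Continuous fun φ => ∫ x, T x φ ∂μ := by
  refine (LipschitzWith.of_dist_le_mul (K := K * (μ.real Set.univ).toNNReal)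
    fun φ ψ => ?_).continuous
  rw [dist_eq_norm, ← integral_sub (hint φ) (hint ψ)]
  refine (norm_integral_le_of_norm_le_const (C := K * dist φ ψ) (.of_forall fun x => ?_)).trans ?_
  · simpa only [dist_eq_norm] using (hT x).dist_le_mul φ ψ
  · rw [NNReal.coe_mul, Real.coe_toNNReal _ measureReal_nonneg, mul_right_comm]

end EquiLipschitzFamilies

section Correlations

variable {ι : Type*} [Fintype ι]

lemma continuousMap_unitAddTorus_induction {p : C(UnitAddTorus ι, ℂ) → Prop}
    (closed : IsClosed {φ | p φ}) (add : ∀ φ ψ, p φ → p ψ → p (φ + ψ))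
    (smul : ∀ (c : ℂ) φ, p φ → p (c • φ)) (mFourier : ∀ a, p (UnitAddTorus.mFourier a))
    (φ : C(UnitAddTorus ι, ℂ)) : p φ := by
  let V : Submodule ℂ C(UnitAddTorus ι, ℂ) :=
    { carrier := {φ | p φ}
      add_mem' := add _ _
      zero_mem' := zero_smul ℂ (UnitAddTorus.mFourier (0 : ι → ℤ)) ▸ smul 0 _ (mFourier 0)
      smul_mem' := smul }
  have hV : (Submodule.span ℂ (Set.range UnitAddTorus.mFourier)).topologicalClosure ≤ V :=
    Submodule.topologicalClosure_minimal _
      (Submodule.span_le.mpr (Set.range_subset_iff.mpr mFourier)) closed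
  rw [UnitAddTorus.span_mFourier_closure_eq_top] at hV
  exact hV Submodule.mem_top

variable {N : ℕ}

/-- The sum of a test function over the families of pairwise distinct coordinates of `z`, the
observable whose mean is the correlation function of the coordinates. -/
def correlationSum (z : UnitAddTorus (Fin N)) (φ : C(UnitAddTorus ι, ℂ)) : ℂ :=
  ∑ k : ι ↪ Fin N, φ (z ∘ k)

lemma correlationSum_add (z : UnitAddTorus (Fin N)) (φ ψ : C(UnitAddTorus ι, ℂ)) :
    correlationSum z (φ + ψ) = correlationSum z φ + correlationSum z ψ :=
  Finset.sum_add_distrib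

lemma correlationSum_smul (z : UnitAddTorus (Fin N)) (c : ℂ) (φ : C(UnitAddTorus ι, ℂ)) :
    correlationSum z (c • φ) = c • correlationSum z φ := by
  simp only [correlationSum, ContinuousMap.smul_apply, Finset.smul_sum]

lemma correlationSum_mFourier (z : UnitAddTorus (Fin N)) (a : ι → ℤ) :
    correlationSum z (UnitAddTorus.mFourier a) = torusEval z (embeddingSum N a) := by
  simp only [correlationSum, embeddingSum, map_sum, map_prod, torusEval_varZpow]
  rfl

lemma lipschitzWith_correlationSum (z : UnitAddTorus (Fin N)) :
    LipschitzWith (Fintype.card (ι ↪ Fin N)) (correlationSum (ι := ι) z) := by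
  refine LipschitzWith.of_dist_le_mul fun φ ψ => ?_
  refine (dist_sum_sum_le_of_le _ fun (k : ι ↪ Fin N) _ =>
    ContinuousMap.dist_apply_le_dist (f := φ) (g := ψ) (z ∘ k)).trans ?_
  simp

variable {x : unitaryGroup (Fin N) ℂ → UnitAddTorus (Fin N)}

lemma exists_correlationSum_mFourier_eq_traceEval (hx : ∀ X, HasEigenangles X (x X)) (a : ι → ℤ) :
    ∃ P, powerSumEval N P = embeddingSum N a ∧
      ∀ X, correlationSum (x X) (UnitAddTorus.mFourier a) = traceEval X P := by
  obtain ⟨P, hP⟩ := embeddingSum_mem_range_powerSumEval (N := N) a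
  refine ⟨P, hP, fun X => ?_⟩
  rw [correlationSum_mFourier, (hx X).traceEval_eq, ← hP]
  rfl

lemma continuous_correlationSum (hx : ∀ X, HasEigenangles X (x X)) (φ : C(UnitAddTorus ι, ℂ)) :
    Continuous fun X => correlationSum (x X) φ := by
  induction φ using continuousMap_unitAddTorus_induction with
  | closed =>
    exact isClosed_setOf_continuous_of_lipschitzWith fun X => lipschitzWith_correlationSum (x X)
  | add φ ψ hφ hψ => simpa only [correlationSum_add] using! hφ.add hψ
  | smul c φ hφ => simpa only [correlationSum_smul] using! hφ.const_smul c
  | mFourier a =>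
    obtain ⟨P, -, hP⟩ := exists_correlationSum_mFourier_eq_traceEval hx a
    simpa only [hP] using continuous_traceEval P

theorem integral_correlationSum (μ : Measure (unitaryGroup (Fin N) ℂ)) [IsProbabilityMeasure μ]
    [μ.IsMulLeftInvariant] (hx : ∀ X, HasEigenangles X (x X)) (φ : C(UnitAddTorus ι, ℂ)) :
    ∫ X, correlationSum (x X) φ ∂μ = ∫ y, correlationDensity N y * φ y := by
  have hleft (φ : C(UnitAddTorus ι, ℂ)) : Integrable (fun X => correlationSum (x X) φ) μ :=
    (continuous_correlationSum hx φ).integrable_of_hasCompactSupport (.of_compactSpace _)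
  have hright (φ : C(UnitAddTorus ι, ℂ)) :
      Integrable fun y : UnitAddTorus ι => correlationDensity N y * φ y :=
    ((continuous_correlationDensity N).mul φ.continuous).integrable_of_hasCompactSupport
      (.of_compactSpace _)
  obtain ⟨C, hC⟩ := isCompact_univ.exists_bound_of_continuousOn
    (continuous_correlationDensity (ι := ι) N).continuousOn
  have hlip (y : UnitAddTorus ι) :
      LipschitzWith C.toNNReal fun φ : C(UnitAddTorus ι, ℂ) => correlationDensity N y * φ y := by
    refine LipschitzWith.of_dist_le_mul fun φ ψ => ?_
    rw [dist_eq_norm, ← mul_sub, norm_mul, ← dist_eq_norm]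
    exact mul_le_mul ((hC y trivial).trans (Real.le_coe_toNNReal C))
      (ContinuousMap.dist_apply_le_dist y) dist_nonneg NNReal.zero_le_coe
  induction φ using continuousMap_unitAddTorus_induction with
  | closed =>
    exact isClosed_eq
      (continuous_integral_of_lipschitzWith hleft fun X => lipschitzWith_correlationSum (x X))
      (continuous_integral_of_lipschitzWith hright hlip)
  | add φ ψ hφ hψ =>
    simp only [correlationSum_add, ContinuousMap.add_apply, mul_add]
    rw [integral_add (hleft φ) (hleft ψ), integral_add (hright φ) (hright ψ), hφ, hψ]
  | smul c φ hφ =>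
    simp only [correlationSum_smul, ContinuousMap.smul_apply, mul_smul_comm]
    rw [MeasureTheory.integral_smul, MeasureTheory.integral_smul, hφ]
  | mFourier a =>
    obtain ⟨P, hP, hsum⟩ := exists_correlationSum_mFourier_eq_traceEval hx a
    simp only [hsum]
    rw [integral_traceEval μ hx, hP, coeff_vandermondeDet_mul_embeddingSum,
      integral_correlationDensity_mul_mFourier]

end Correlations

section Angles

/-- The point of the circle `ℝ / ℤ` with a given angle in radians. -/
def circleOfAngle (t : ℝ) : UnitAddCircle := (t / (2 * π) : ℝ)

lemma circleOfAngle_eq_iff {s t : ℝ} :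
    circleOfAngle s = circleOfAngle t ↔ ∃ m : ℤ, s - t = 2 * π * m := by
  rw [← sub_eq_zero, circleOfAngle, circleOfAngle, ← AddCircle.coe_sub, AddCircle.coe_eq_zero_iff]
  refine exists_congr fun m => ?_
  rw [← sub_div, eq_div_iff two_pi_pos.ne', zsmul_one, eq_comm, mul_comm]

lemma isOpenQuotientMap_circleOfAngle : IsOpenQuotientMap circleOfAngle :=
  QuotientAddGroup.isOpenQuotientMap_mk.comp
    (Homeomorph.mulRight₀ (2 * π)⁻¹ (inv_ne_zero two_pi_pos.ne')).isOpenQuotientMap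

lemma fourier_circleOfAngle (n : ℤ) (t : ℝ) :
    fourier n (circleOfAngle t) = Complex.exp (n * (Complex.I * t)) := by
  rw [circleOfAngle, fourier_coe_apply]
  congr 1
  push_cast
  field_simp

lemma exists_continuousMap_comp_circleOfAngle {ι E : Type*} [TopologicalSpace E]
    {g : (ι → ℝ) → E} (hg : Continuous g)
    (hper : ∀ (t : ι → ℝ) (m : ι → ℤ), g (fun i => t i + m i * (2 * π)) = g t) :
    ∃ φ : C(UnitAddTorus ι, E), ∀ t : ι → ℝ, φ (circleOfAngle ∘ t) = g t := by
  let q : C(ι → ℝ, UnitAddTorus ι) :=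
    ⟨_, (IsOpenQuotientMap.piMap fun _ : ι => isOpenQuotientMap_circleOfAngle).continuous⟩
  have hq : Topology.IsQuotientMap q :=
    (IsOpenQuotientMap.piMap fun _ : ι => isOpenQuotientMap_circleOfAngle).isQuotientMap
  have hfactor : Function.FactorsThrough (⟨g, hg⟩ : C(ι → ℝ, E)) q := fun s t hst => by
    choose m hm using fun i => circleOfAngle_eq_iff.mp (congrFun hst i)
    obtain rfl : s = fun i => t i + m i * (2 * π) := funext fun i => by linarith [hm i]
    exact hper t m
  exact ⟨hq.lift ⟨g, hg⟩ hfactor, DFunLike.congr_fun (hq.lift_comp ⟨g, hg⟩ hfactor)⟩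

end Angles

section TorusIntegral

variable {E : Type*} [NormedAddCommGroup E] [NormedSpace ℝ E]

lemma integral_unitAddCircle_eq_intervalIntegral (g : UnitAddCircle → E) :
    ∫ y, g y = (2 * π)⁻¹ • ∫ t in (-π)..π, g (circleOfAngle t) := by
  have hlen : π / (2 * π) = -π / (2 * π) + 1 := by field_simp; ring
  simp only [circleOfAngle]
  rw [intervalIntegral.integral_comp_div (fun s : ℝ => g s) two_pi_pos.ne',
    inv_smul_smul₀ two_pi_pos.ne', hlen, UnitAddCircle.intervalIntegral_preimage]

lemma integral_unitAddTorus_succ {n : ℕ} {g : UnitAddTorus (Fin (n + 1)) → E}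
    (hg : Continuous g) :
    ∫ y, g y = (2 * π)⁻¹ • ∫ t in (-π)..π, ∫ y : UnitAddTorus (Fin n),
      g (Fin.cons (circleOfAngle t) y) := by
  have hmp := (volume_preserving_piFinSuccAbove (fun _ : Fin (n + 1) => UnitAddCircle) 0).symm
  have hcons : Continuous fun p : UnitAddCircle × UnitAddTorus (Fin n) =>
      (Fin.cons p.1 p.2 : UnitAddTorus (Fin (n + 1))) := by
    fun_prop
  calc ∫ y, g y = ∫ p : UnitAddCircle × UnitAddTorus (Fin n), g (Fin.cons p.1 p.2) := by
        rw [← hmp.integral_comp']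
        simp only [MeasurableEquiv.piFinSuccAbove_symm_apply, Fin.insertNthEquiv_zero]
        rfl
    _ = ∫ s, ∫ y : UnitAddTorus (Fin n), g (Fin.cons s y) :=
        integral_prod _ ((hg.comp hcons).integrable_of_hasCompactSupport (.of_compactSpace _))
    _ = _ := integral_unitAddCircle_eq_intervalIntegral _

lemma integral_unitAddTorus_fin_three [CompleteSpace E] {g : UnitAddTorus (Fin 3) → E}
    (hg : Continuous g) :
    ∫ y, g y = ((2 * π) ^ 3)⁻¹ • ∫ t₁ in (-π)..π, ∫ t₂ in (-π)..π, ∫ t₃ in (-π)..π,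
      g (circleOfAngle ∘ ![t₁, t₂, t₃]) := by
  have hcons {n : ℕ} {h : UnitAddTorus (Fin (n + 1)) → E} (hh : Continuous h) (s : UnitAddCircle) :
      Continuous fun y : UnitAddTorus (Fin n) => h (Fin.cons s y) := by
    fun_prop
  have hpoint (t₁ t₂ t₃ : ℝ) (y : UnitAddTorus (Fin 0)) :
      Fin.cons (circleOfAngle t₁) (Fin.cons (circleOfAngle t₂) (Fin.cons (circleOfAngle t₃) y)) =
        circleOfAngle ∘ ![t₁, t₂, t₃] := by
    funext i
    fin_cases i <;> rfl
  rw [integral_unitAddTorus_succ hg]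
  simp only [integral_unitAddTorus_succ (hcons hg _),
    integral_unitAddTorus_succ (hcons (hcons hg _) _), hpoint, intervalIntegral.integral_smul,
    smul_smul, MeasureTheory.integral_const, probReal_univ, one_smul]
  congr 1
  ring

end TorusIntegral

lemma sum_embedding_fin_three {κ M : Type*} [Fintype κ] [DecidableEq κ] [AddCommMonoid M]
    (g : κ → κ → κ → M) :
    ∑ k : Fin 3 ↪ κ, g (k 0) (k 1) (k 2) =
      ∑ a, ∑ b, ∑ c, if a ≠ b ∧ a ≠ c ∧ b ≠ c then g a b c else 0 := by
  simp only [← Fintype.sum_prod_type']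
  refine Fintype.sum_of_injective (fun k : Fin 3 ↪ κ => (k 0, k 1, k 2)) (fun k l h => ?_) _ _
    (fun ⟨a, b, c⟩ habc => if_neg fun ⟨hab, hac, hbc⟩ => habc ?_) fun k => (if_pos ?_).symm
  · simp only [Prod.mk.injEq] at h
    exact DFunLike.ext _ _ fun i => by fin_cases i <;> simp_all
  · exact ⟨⟨![a, b, c], fun i j hij => by fin_cases i <;> fin_cases j <;> simp_all⟩, rfl⟩
  · simp [k.injective.eq_iff]

section JTerms

variable {a b c : ℂ}

lemma zf_sub_eq (a b : ℂ) : zf (a - b) = cexp a / (cexp a - cexp b) := by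
  have ha := Complex.exp_ne_zero a
  rw [zf, neg_sub, Complex.exp_sub, one_sub_div ha, inv_div]

lemma zl_eq_of_exp_ne_one {u : ℂ} (hu : cexp u ≠ 1) : zl u = (1 - cexp u)⁻¹ := by
  have hne : 1 - cexp (-u) ≠ 0 := by
    rwa [Complex.exp_neg, sub_ne_zero, ne_comm, Ne, inv_eq_one]
  have hderiv : HasDerivAt zf (-cexp (-u) / (1 - cexp (-u)) ^ 2) u := by
    simpa using! (((hasDerivAt_neg u).cexp).const_sub 1).fun_inv hne
  have hu' : 1 - cexp u ≠ 0 := sub_ne_zero.mpr hu.symm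
  have hexp := Complex.exp_ne_zero u
  rw [zl, hderiv.deriv, zf]
  rw [Complex.exp_neg] at hne ⊢
  field_simp
  ring

lemma deriv_zl_eq_of_exp_ne_one {u : ℂ} (hu : cexp u ≠ 1) :
    deriv zl u = cexp u / (1 - cexp u) ^ 2 := by
  have hderiv : HasDerivAt (fun x => (1 - cexp x)⁻¹) (cexp u / (1 - cexp u) ^ 2) u := by
    simpa using ((Complex.hasDerivAt_exp u).const_sub 1).fun_inv (sub_ne_zero.mpr hu.symm)
  have hzl : zl =ᶠ[nhds u] fun x => (1 - cexp x)⁻¹ :=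
    (Complex.continuous_exp.continuousAt.eventually_ne hu).mono fun _ => zl_eq_of_exp_ne_one
  exact (hderiv.congr_of_eventuallyEq hzl).deriv

lemma exp_sub_ne_one (hab : cexp a ≠ cexp b) : cexp (a - b) ≠ 1 := by
  rwa [Complex.exp_sub, Ne, div_eq_one_iff_eq (Complex.exp_ne_zero b)]

lemma zl_sub_eq (hab : cexp a ≠ cexp b) : zl (a - b) = cexp b / (cexp b - cexp a) := by
  rw [zl_eq_of_exp_ne_one (exp_sub_ne_one hab), Complex.exp_sub,
    one_sub_div (Complex.exp_ne_zero b), inv_div]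

lemma deriv_zl_sub_eq (hab : cexp a ≠ cexp b) :
    deriv zl (a - b) = cexp a * cexp b / (cexp a - cexp b) ^ 2 := by
  have hb := Complex.exp_ne_zero b
  have hba := sub_ne_zero.mpr hab.symm
  have hab' := sub_ne_zero.mpr hab
  rw [deriv_zl_eq_of_exp_ne_one (exp_sub_ne_one hab), Complex.exp_sub, one_sub_div hb]
  field_simp
  ring

lemma exp_neg_natCast_mul_sub (N : ℕ) (a b : ℂ) :
    cexp (-(N : ℂ) * (a - b)) = cexp b ^ N / cexp a ^ N := by
  rw [← Complex.exp_nat_mul, ← Complex.exp_nat_mul, ← Complex.exp_sub]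
  congr 1
  ring

/-- The geometric sum `∑_{l < N} e^{lu}`: the Fourier kernel, continued to complex angles. -/
def expKernel (N : ℕ) (u : ℂ) : ℂ := ∑ l : Fin N, cexp ((l : ℤ) * u)

lemma expKernel_sub_eq (N : ℕ) (hab : cexp a ≠ cexp b) :
    expKernel N (a - b) =
      cexp b * (cexp a ^ N - cexp b ^ N) / (cexp b ^ N * (cexp a - cexp b)) := by
  have hb := Complex.exp_ne_zero b
  have hab' := sub_ne_zero.mpr hab
  simp only [expKernel, Int.cast_natCast, Complex.exp_nat_mul]
  rw [Fin.sum_univ_eq_sum_range (cexp (a - b) ^ ·), geom_sum_eq (exp_sub_ne_one hab),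
    Complex.exp_sub, div_pow, div_sub_one hb, div_sub_one (pow_ne_zero N hb)]
  field_simp

lemma Jb_neg_add_Jb_neg (N : ℕ) (hab : cexp a ≠ cexp b) :
    Jb N (-a) b + Jb N (-b) a = -(expKernel N (a - b) * expKernel N (b - a)) := by
  have hJb {a b : ℂ} (hab : cexp a ≠ cexp b) : Jb N (-b) a =
      cexp a * cexp b / (cexp a - cexp b) ^ 2 * (1 - cexp b ^ N / cexp a ^ N) := by
    have h := sub_ne_zero.mpr hab
    rw [Jb, neg_add_eq_sub, neg_neg, deriv_zl_sub_eq hab, exp_neg_natCast_mul_sub, zf_sub_eq,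
      zf_sub_eq, ← neg_sub (cexp a) (cexp b)]
    field_simp
    ring
  have hb := pow_ne_zero N (Complex.exp_ne_zero b)
  have ha := pow_ne_zero N (Complex.exp_ne_zero a)
  have h := sub_ne_zero.mpr hab
  rw [hJb hab, hJb hab.symm, expKernel_sub_eq N hab, expKernel_sub_eq N hab.symm,
    ← neg_sub (cexp a) (cexp b)]
  field_simp
  ring

lemma Ja_neg_eq (N : ℕ) (hab : cexp a ≠ cexp b) (hac : cexp a ≠ cexp c) (hbc : cexp b ≠ cexp c) :
    Ja N a b (-c) = cexp a * cexp b * cexp c *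
      (cexp c ^ N / cexp a ^ N - cexp c ^ N / cexp b ^ N) /
        ((cexp a - cexp b) * (cexp b - cexp c) * (cexp c - cexp a)) := by
  have hab' := sub_ne_zero.mpr hab
  have hca' := sub_ne_zero.mpr hac.symm
  have hbc' := sub_ne_zero.mpr hbc
  have ha := pow_ne_zero N (Complex.exp_ne_zero a)
  have hb := pow_ne_zero N (Complex.exp_ne_zero b)
  simp only [Ja, ← sub_eq_add_neg, sub_neg_eq_add, neg_add_eq_sub, exp_neg_natCast_mul_sub,
    zf_sub_eq, zl_sub_eq hab, zl_sub_eq hab.symm, zl_sub_eq hac, zl_sub_eq hbc]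
  rw [← neg_sub (cexp c) (cexp a), ← neg_sub (cexp a) (cexp b), ← neg_sub (cexp b) (cexp c)]
  field_simp
  ring

lemma Ja_neg_add_Ja_neg_add_Ja_neg (N : ℕ) (hab : cexp a ≠ cexp b) (hac : cexp a ≠ cexp c)
    (hbc : cexp b ≠ cexp c) :
    Ja N a b (-c) + Ja N a c (-b) + Ja N b c (-a) =
      expKernel N (a - b) * expKernel N (b - c) * expKernel N (c - a) := by
  have hab' := sub_ne_zero.mpr hab
  have hca' := sub_ne_zero.mpr hac.symm
  have hbc' := sub_ne_zero.mpr hbc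
  have ha := pow_ne_zero N (Complex.exp_ne_zero a)
  have hb := pow_ne_zero N (Complex.exp_ne_zero b)
  have hc := pow_ne_zero N (Complex.exp_ne_zero c)
  rw [Ja_neg_eq N hab hac hbc, Ja_neg_eq N hac hab hbc.symm, Ja_neg_eq N hbc hab.symm hac.symm,
    expKernel_sub_eq N hab, expKernel_sub_eq N hbc, expKernel_sub_eq N hac.symm]
  rw [← neg_sub (cexp c) (cexp a), ← neg_sub (cexp a) (cexp b), ← neg_sub (cexp b) (cexp c)]
  field_simp
  ring

lemma fourierKernel_circleOfAngle_sub (N : ℕ) (s t : ℝ) :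
    fourierKernel N (circleOfAngle s - circleOfAngle t) =
      expKernel N (Complex.I * s - Complex.I * t) := by
  have hsub : circleOfAngle s - circleOfAngle t = circleOfAngle (s - t) := by
    rw [circleOfAngle, circleOfAngle, circleOfAngle, sub_div, AddCircle.coe_sub]
  simp only [fourierKernel, expKernel, hsub, ContinuousMap.coe_sum, Finset.sum_apply,
    fourier_circleOfAngle, Complex.ofReal_sub, mul_sub]

lemma correlationDensity_fin_three (N : ℕ) (y : UnitAddTorus (Fin 3)) :
    correlationDensity N y = N ^ 3 +
      fourierKernel N (y 0 - y 1) * fourierKernel N (y 1 - y 2) * fourierKernel N (y 2 - y 0) +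
      fourierKernel N (y 1 - y 0) * fourierKernel N (y 2 - y 1) * fourierKernel N (y 0 - y 2) -
      N * (fourierKernel N (y 0 - y 1) * fourierKernel N (y 1 - y 0) +
        fourierKernel N (y 0 - y 2) * fourierKernel N (y 2 - y 0) +
        fourierKernel N (y 1 - y 2) * fourierKernel N (y 2 - y 1)) := by
  have hzero : fourierKernel N 0 = N := by simp [fourierKernel]
  have hdet : correlationDensity N y = (of fun i j => fourierKernel N (y i - y j)).det := by
    rw [correlationDensity]
    convert rfl
  rw [hdet, det_fin_three]
  simp only [of_apply, sub_self, hzero]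
  ring

lemma exp_I_mul_eq_iff_circleOfAngle_eq {s t : ℝ} :
    cexp (Complex.I * s) = cexp (Complex.I * t) ↔ circleOfAngle s = circleOfAngle t := by
  have h (r : ℝ) : cexp (Complex.I * r) = (AddCircle.toCircle (circleOfAngle r) : ℂ) := by
    rw [← fourier_one, fourier_circleOfAngle, Int.cast_one, one_mul]
  rw [h, h, Circle.coe_inj, (AddCircle.injective_toCircle one_ne_zero).eq_iff]

lemma Jsum_eq_correlationDensity (N : ℕ) {t₁ t₂ t₃ : ℝ} (h₁₂ : circleOfAngle t₁ ≠ circleOfAngle t₂)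
    (h₁₃ : circleOfAngle t₁ ≠ circleOfAngle t₃) (h₂₃ : circleOfAngle t₂ ≠ circleOfAngle t₃) :
    Jsum N t₁ t₂ t₃ = correlationDensity N (circleOfAngle ∘ ![t₁, t₂, t₃]) := by
  have hexp {s t : ℝ} (hst : circleOfAngle s ≠ circleOfAngle t) :
      cexp (Complex.I * s) ≠ cexp (Complex.I * t) :=
    mt exp_I_mul_eq_iff_circleOfAngle_eq.mp hst
  have hexp' {s t : ℝ} (hst : circleOfAngle s ≠ circleOfAngle t) :
      cexp (-(Complex.I * s)) ≠ cexp (-(Complex.I * t)) := by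
    simpa only [Complex.exp_neg, ne_eq, _root_.inv_inj] using hexp hst
  have hplus := Ja_neg_add_Ja_neg_add_Ja_neg N (hexp h₁₂) (hexp h₁₃) (hexp h₂₃)
  have hminus := Ja_neg_add_Ja_neg_add_Ja_neg N (hexp' h₁₂) (hexp' h₁₃) (hexp' h₂₃)
  simp only [neg_neg, neg_sub_neg] at hminus
  rw [Jsum, correlationDensity_fin_three]
  simp only [Function.comp_apply, cons_val_zero, cons_val_one, cons_val,
    fourierKernel_circleOfAngle_sub]
  linear_combination hplus + hminus + N * Jb_neg_add_Jb_neg N (hexp h₁₂) +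
    N * Jb_neg_add_Jb_neg N (hexp h₁₃) + N * Jb_neg_add_Jb_neg N (hexp h₂₃)

end JTerms

section Coincidences

lemma ae_circleOfAngle_ne (s : ℝ) : ∀ᵐ t : ℝ, circleOfAngle s ≠ circleOfAngle t := by
  have h : ∀ᵐ t : ℝ, ∀ m : ℤ, t ≠ s - 2 * π * m := ae_all_iff.mpr fun m => Measure.ae_ne volume _
  filter_upwards [h] with t ht hst
  obtain ⟨m, hm⟩ := circleOfAngle_eq_iff.mp hst
  exact ht m (by linarith)

lemma intervalIntegral_congr_of_circleOfAngle_ne {E : Type*} [NormedAddCommGroup E]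
    [NormedSpace ℝ E] {G H : ℝ → ℝ → ℝ → E}
    (h : ∀ t₁ t₂ t₃, circleOfAngle t₁ ≠ circleOfAngle t₂ → circleOfAngle t₁ ≠ circleOfAngle t₃ →
      circleOfAngle t₂ ≠ circleOfAngle t₃ → G t₁ t₂ t₃ = H t₁ t₂ t₃) (a b : ℝ) :
    ∫ t₁ in a..b, ∫ t₂ in a..b, ∫ t₃ in a..b, G t₁ t₂ t₃ =
      ∫ t₁ in a..b, ∫ t₂ in a..b, ∫ t₃ in a..b, H t₁ t₂ t₃ := by
  refine intervalIntegral.integral_congr fun t₁ _ => intervalIntegral.integral_congr_ae ?_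
  filter_upwards [ae_circleOfAngle_ne t₁] with t₂ h₁₂ _
  refine intervalIntegral.integral_congr_ae ?_
  filter_upwards [ae_circleOfAngle_ne t₁, ae_circleOfAngle_ne t₂] with t₃ h₁₃ h₂₃ _
  exact h t₁ t₂ t₃ h₁₂ h₁₃ h₂₃

end Coincidences

section TripleCorrelation

variable {N : ℕ}

lemma exists_continuousMap_circleOfAngle_fin_three {E : Type*} [TopologicalSpace E]
    {f : ℝ → ℝ → ℝ → E} (hf : Continuous fun p : ℝ × ℝ × ℝ => f p.1 p.2.1 p.2.2)
    (hper₁ : ∀ x y w, f (x + 2 * π) y w = f x y w) (hper₂ : ∀ x y w, f x (y + 2 * π) w = f x y w)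
    (hper₃ : ∀ x y w, f x y (w + 2 * π) = f x y w) :
    ∃ φ : C(UnitAddTorus (Fin 3), E),
      ∀ t : Fin 3 → ℝ, φ (circleOfAngle ∘ t) = f (t 0) (t 1) (t 2) := by
  refine exists_continuousMap_comp_circleOfAngle (g := fun t => f (t 0) (t 1) (t 2))
    (hf.comp (by fun_prop : Continuous fun t : Fin 3 → ℝ => (t 0, t 1, t 2))) fun t m => ?_
  have h₁ (y w : ℝ) : Function.Periodic (f · y w) (2 * π) := fun x => hper₁ x y w
  have h₂ (x w : ℝ) : Function.Periodic (f x · w) (2 * π) := fun y => hper₂ x y w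
  have h₃ (x y : ℝ) : Function.Periodic (f x y) (2 * π) := hper₃ x y
  exact ((h₁ _ _).int_mul (m 0) _).trans (((h₂ _ _).int_mul (m 1) _).trans
    ((h₃ _ _).int_mul (m 2) _))

lemma hasEigenangles_circleOfAngle {X : unitaryGroup (Fin N) ℂ} {θ : Fin N → ℝ}
    (hθ : ∀ s, Lam X s = ∏ j, (1 - s * cexp (-(θ j : ℂ) * Complex.I))) :
    HasEigenangles X (circleOfAngle ∘ θ) := fun s => by
  simp only [hθ s, Function.comp_apply, fourier_circleOfAngle, Int.cast_neg, Int.cast_one,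
    neg_mul, one_mul, mul_comm Complex.I]

lemma sum_distinct_triples_eq_correlationSum (θ : Fin N → ℝ) {f : ℝ → ℝ → ℝ → ℂ}
    {φ : C(UnitAddTorus (Fin 3), ℂ)}
    (hφ : ∀ t : Fin 3 → ℝ, φ (circleOfAngle ∘ t) = f (t 0) (t 1) (t 2)) :
    (∑ j₁, ∑ j₂, ∑ j₃, if j₁ ≠ j₂ ∧ j₁ ≠ j₃ ∧ j₂ ≠ j₃ then f (θ j₁) (θ j₂) (θ j₃) else 0) =
      correlationSum (circleOfAngle ∘ θ) φ := by
  rw [← sum_embedding_fin_three fun a b c => f (θ a) (θ b) (θ c)]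
  simp only [correlationSum, Function.comp_assoc, hφ, Function.comp_apply]

theorem stmt_16_general (N : ℕ) (μ : Measure (Matrix.unitaryGroup (Fin N) ℂ))
    [IsProbabilityMeasure μ]
    (hHaar : ∀ A : Matrix.unitaryGroup (Fin N) ℂ, MeasurePreserving (fun X => A * X) μ μ)
    (θ : Matrix.unitaryGroup (Fin N) ℂ → Fin N → ℝ)
    (hθ : ∀ (X : Matrix.unitaryGroup (Fin N) ℂ) (s : ℂ),
      Lam X s = ∏ j, (1 - s * Complex.exp (-((θ X j : ℝ) : ℂ) * Complex.I)))
    (f : ℝ → ℝ → ℝ → ℂ) (hf : Continuous fun p : ℝ × ℝ × ℝ => f p.1 p.2.1 p.2.2)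
    (hper1 : ∀ x y w, f (x + 2 * π) y w = f x y w)
    (hper2 : ∀ x y w, f x (y + 2 * π) w = f x y w)
    (hper3 : ∀ x y w, f x y (w + 2 * π) = f x y w)
    (F : ℝ → ℝ → ℝ → ℂ)
    (hFeq : ∀ t1 t2 t3 : ℝ, (∀ m : ℤ, t1 - t2 ≠ 2 * π * m) →
      (∀ m : ℤ, t1 - t3 ≠ 2 * π * m) → (∀ m : ℤ, t2 - t3 ≠ 2 * π * m) →
      F t1 t2 t3 = Jsum N t1 t2 t3) :
    (∫ X, (∑ j1, ∑ j2, ∑ j3,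
        if j1 ≠ j2 ∧ j1 ≠ j3 ∧ j2 ≠ j3 then f (θ X j1) (θ X j2) (θ X j3) else 0) ∂μ) =
      ((((2 * π) ^ 3)⁻¹ : ℝ) : ℂ) *
        ∫ t1 in (-π)..π, ∫ t2 in (-π)..π, ∫ t3 in (-π)..π, F t1 t2 t3 * f t1 t2 t3 := by
  obtain ⟨φ, hφ⟩ := exists_continuousMap_circleOfAngle_fin_three hf hper1 hper2 hper3
  have : μ.IsMulLeftInvariant := ⟨fun A => (hHaar A).map_eq⟩
  have hcont : Continuous fun y : UnitAddTorus (Fin 3) => correlationDensity N y * φ y :=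
    (continuous_correlationDensity N).mul φ.continuous
  simp only [sum_distinct_triples_eq_correlationSum _ hφ]
  rw [integral_correlationSum μ fun X => hasEigenangles_circleOfAngle (hθ X),
    integral_unitAddTorus_fin_three hcont, Complex.real_smul]
  congr 1
  refine intervalIntegral_congr_of_circleOfAngle_ne (fun t₁ t₂ t₃ h₁₂ h₁₃ h₂₃ => ?_) _ _
  rw [hφ, ← Jsum_eq_correlationDensity N h₁₂ h₁₃ h₂₃]
  simp only [ne_eq, circleOfAngle_eq_iff, not_exists] at h₁₂ h₁₃ h₂₃
  rw [hFeq t₁ t₂ t₃ h₁₂ h₁₃ h₂₃]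
  rfl

end TripleCorrelation

/-- Triple correlation of eigenvalues of random unitary matrices via the ratios theorem:
the average over `U(N)` (with Haar probability measure, characterised as a left-invariant
probability measure) of the sum of `f` over triples of distinct eigenvalue indices equals
the triple integral of the `J`-term sum (interpreted via its unique continuous/analytic
extension `F` across the removable singularities) against `f`. -/
theorem stmt_16 (N : ℕ) (μ : Measure (Matrix.unitaryGroup (Fin N) ℂ))
    [IsProbabilityMeasure μ]
    (hHaar : ∀ A : Matrix.unitaryGroup (Fin N) ℂ,
      MeasurePreserving (fun X => A * X) μ μ)
    (θ : Matrix.unitaryGroup (Fin N) ℂ → Fin N → ℝ)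
    (hθ : ∀ (X : Matrix.unitaryGroup (Fin N) ℂ) (s : ℂ),
      Lam X s = ∏ j, (1 - s * Complex.exp (-((θ X j : ℝ) : ℂ) * Complex.I)))
    (f : ℂ → ℂ → ℂ → ℂ)
    (hf : Differentiable ℂ (fun p : ℂ × ℂ × ℂ => f p.1 p.2.1 p.2.2))
    (hper1 : ∀ x y w : ℂ, f (x + 2 * π) y w = f x y w)
    (hper2 : ∀ x y w : ℂ, f x (y + 2 * π) w = f x y w)
    (hper3 : ∀ x y w : ℂ, f x y (w + 2 * π) = f x y w)
    (F : ℝ → ℝ → ℝ → ℂ)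
    (hF : Continuous (fun p : ℝ × ℝ × ℝ => F p.1 p.2.1 p.2.2))
    (hFeq : ∀ t1 t2 t3 : ℝ, (∀ m : ℤ, t1 - t2 ≠ 2 * π * m) →
      (∀ m : ℤ, t1 - t3 ≠ 2 * π * m) → (∀ m : ℤ, t2 - t3 ≠ 2 * π * m) →
      F t1 t2 t3 = Jsum N t1 t2 t3) :
    (∫ X, (∑ j1, ∑ j2, ∑ j3,
        if j1 ≠ j2 ∧ j1 ≠ j3 ∧ j2 ≠ j3 then
          f ((θ X j1 : ℝ) : ℂ) ((θ X j2 : ℝ) : ℂ) ((θ X j3 : ℝ) : ℂ)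
        else 0) ∂μ) =
      ((((2 * π) ^ 3)⁻¹ : ℝ) : ℂ) *
        ∫ t1 in (-π)..π, ∫ t2 in (-π)..π, ∫ t3 in (-π)..π,
          F t1 t2 t3 * f (t1 : ℂ) (t2 : ℂ) (t3 : ℂ) := by
  exact stmt_16_general N μ hHaar θ hθ (fun x y w => f x y w) (hf.continuous.comp (by fun_prop :
      Continuous fun p : ℝ × ℝ × ℝ => ((p.1 : ℂ), (p.2.1 : ℂ), (p.2.2 : ℂ))))
    (fun x y w => by simpa using hper1 x y w) (fun x y w => by simpa using hper2 x y w)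
    (fun x y w => by simpa using hper3 x y w) F hFeq

end
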